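/- arXiv:1304.3918 — 8 statements merged into one kernel-verified Lean document; each statement's English description precedes it below -/
import Mathlib

section
/- Let n ≥ 3, let I, J be integers with 1 ≤ I and I + 2 ≤ J ≤ n, let μ ∈ ℝ, σ > 0 and ξ ∈ ℝ with ξ ≠ 0. Then the function g ↦ ξ̂_{IJ}(u_ξ(g_1), …, u_ξ(g_n)) is Lebesgue integrable on the simplex Δ_n and n! · ∫_{Δ_n} ξ̂_{IJ}(u_ξ(g_1), …, u_ξ(g_n)) dg = ξ. That is, each elemental estimator is an absolutely unbiased estimator of the GPD tail parameter ξ for every nonzero ξ and every sample size n ≥ 3. -/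
open MeasureTheory Real Set

/-- The GPD tail-quantile function: `u_ξ(t) = μ + (σ/ξ)(t^{-ξ} - 1)` for `ξ ≠ 0`,
and `u_0(t) = μ - σ log t`. -/
noncomputable def gpdQ (μ σ ξ : ℝ) (t : ℝ) : ℝ :=
  if ξ = 0 then μ - σ * Real.log t else μ + σ / ξ * (t ^ (-ξ) - 1)

/-- The open simplex `Δ_n = {g : 0 < g 1 < ⋯ < g n < 1}` in `ℝ^n`. -/
def simplex (n : ℕ) : Set (Fin n → ℝ) :=
  {g | StrictMono g ∧ ∀ i, 0 < g i ∧ g i < 1}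

/-- The data tuple `X_i = u(g_i)` (1-based indexing: `sample n u g i = u (g_{i-1})`,
for `1 ≤ i ≤ n`; junk value `0` outside this range). -/
noncomputable def sample (n : ℕ) (u : ℝ → ℝ) (g : Fin n → ℝ) : ℕ → ℝ :=
  fun i => if h : i - 1 < n then u (g ⟨i - 1, h⟩) else 0

/-- The elemental estimator
`ξ̂_{IJ}(x) = (J−1)·log(x_I − x_{J−1}) − (J−1−I)·log(x_I − x_J) − I·log(x_{I+1} − x_J)`. -/
noncomputable def elemental (I J : ℕ) (x : ℕ → ℝ) : ℝ :=
  ((J : ℝ) - 1) * Real.log (x I - x (J - 1))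
    - ((J : ℝ) - 1 - (I : ℝ)) * Real.log (x I - x J)
    - (I : ℝ) * Real.log (x (I + 1) - x J)

/-! Let `T` be the log-spacing of the quantiles at two fixed positions of a point of `Δ_{n-1}`. The
elemental estimator at `g ∈ Δ_n` is `n T(g without g_n) - ∑ₖ T(g without gₖ)`. Inserting an
independent uniform coordinate into a point of `Δ_{n-1}` gives a point of `Δ_n` in exactly one
position, almost surely, so integrating the sum over `Δ_n` gives `∫ T` over `Δ_{n-1}`. Deleting the
last coordinate `t = g_n` instead leaves `t` times a point of `Δ_{n-1}`, and
`T(t h) = T(h) - ξ log t`, so the first term gives `∫ T` plus a multiple of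
`-ξ ∫₀¹ t^(n-1) log t dt = ξ / n²`; the contributions of `∫ T` cancel. -/

section StrictMonoInsertNth

variable {m : ℕ} {α : Type*} {h : Fin m → α} {t : α}

lemma exists_strictMono_insertNth [LinearOrder α] (hh : StrictMono h) (ht : ∀ j, h j ≠ t) :
    ∃ k : Fin (m + 1), StrictMono (k.insertNth t h : Fin (m + 1) → α) := by
  obtain ⟨k, hk, hmin⟩ := exists_minimal_of_wellFoundedLT
    (fun k : Fin (m + 1) => ∀ i : Fin m, k ≤ i.castSucc → t < h i)
    ⟨Fin.last m, fun i hi => absurd hi (Fin.castSucc_lt_last i).not_ge⟩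
  refine ⟨k, (Fin.strictMono_insertNth_iff _ _ _).2 ⟨hh, fun i hik => ?_, hk⟩⟩
  by_contra hti
  have hlt : t < h i := (not_lt.1 hti).lt_of_ne (ht i).symm
  have hki : k ≤ i.castSucc := hmin (fun j hij =>
    hlt.trans_le (hh.monotone (Fin.castSucc_le_castSucc_iff.1 hij))) hik.le
  exact hik.not_ge hki

lemma eq_of_strictMono_insertNth [PartialOrder α] {k l : Fin (m + 1)}
    (hk : StrictMono (k.insertNth t h : Fin (m + 1) → α))
    (hl : StrictMono (l.insertNth t h : Fin (m + 1) → α)) : k = l := by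
  have heq : (k.insertNth t h : Fin (m + 1) → α) = l.insertNth t h :=
    (hk.range_inj hl).1 (by simp only [Fin.range_insertNth])
  refine hk.injective ?_
  rw [Fin.insertNth_apply_same, heq, Fin.insertNth_apply_same]

end StrictMonoInsertNth

lemma sum_succAbove_pair {M : Type*} [AddCommMonoid M] {m : ℕ}
    (φ : Fin (m + 1) → Fin (m + 1) → M) {a b : Fin m} (hab : a ≤ b) :
    ∑ k : Fin (m + 1), φ (k.succAbove a) (k.succAbove b) =
      (a + 1 : ℕ) • φ a.succ b.succ + (b - a : ℕ) • φ a.castSucc b.succ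
        + (m - b : ℕ) • φ a.castSucc b.castSucc := by
  have hsplit (f : Fin (m + 1) → M) : ∑ k, f k =
      ∑ k ∈ Finset.Iic a.castSucc, f k + ∑ k ∈ Finset.Ioc a.castSucc b.castSucc, f k
        + ∑ k ∈ Finset.Ioi b.castSucc, f k := by
    rw [← Finset.sum_union, ← Finset.sum_union]
    · congr 1
      grind
    all_goals
      rw [Finset.disjoint_left]
      grind
  have hle : ∀ k ∈ Finset.Iic a.castSucc, φ (k.succAbove a) (k.succAbove b) = φ a.succ b.succ := by
    grind [Fin.succAbove]
  have hmid : ∀ k ∈ Finset.Ioc a.castSucc b.castSucc,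
      φ (k.succAbove a) (k.succAbove b) = φ a.castSucc b.succ := by
    grind [Fin.succAbove]
  have hgt : ∀ k ∈ Finset.Ioi b.castSucc,
      φ (k.succAbove a) (k.succAbove b) = φ a.castSucc b.castSucc := by
    grind [Fin.succAbove]
  rw [hsplit, Finset.sum_eq_card_nsmul hle, Finset.sum_eq_card_nsmul hmid,
    Finset.sum_eq_card_nsmul hgt, Fin.card_Iic, Fin.card_Ioc, Fin.card_Ioi]
  simp

lemma measurableSet_simplex (n : ℕ) : MeasurableSet (simplex n) := by
  have : simplex n = (⋂ i, ⋂ j, ⋂ _ : i < j, {g | g i < g j}) ∩ univ.pi fun _ => Ioo 0 1 := by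
    ext g
    simp [simplex, StrictMono]
  rw [this]
  refine .inter (.iInter fun i => .iInter fun j => .iInter fun _ => ?_)
    (.univ_pi fun _ => measurableSet_Ioo)
  exact measurableSet_lt (measurable_pi_apply i) (measurable_pi_apply j)

lemma simplex_subset_pi_Ioo (n : ℕ) : simplex n ⊆ univ.pi fun _ => Ioo 0 1 :=
  fun _ hg i _ => hg.2 i

lemma volume_simplex_ne_top (n : ℕ) : volume (simplex n) ≠ ⊤ :=
  measure_ne_top_of_subset (simplex_subset_pi_Ioo n) (by simp [volume_pi_pi])

/-- The pairs `(t, h)` for which inserting `t` into `h` at position `k` gives a point of the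
simplex: the simplex in the coordinates that single out the `k`-th one. -/
def insertionRegion {m : ℕ} (k : Fin (m + 1)) : Set (ℝ × (Fin m → ℝ)) :=
  {p | (k.insertNth p.1 p.2 : Fin (m + 1) → ℝ) ∈ simplex (m + 1)}

section InsertionRegion

variable {m : ℕ}

lemma mem_insertionRegion {k : Fin (m + 1)} {p : ℝ × (Fin m → ℝ)} :
    p ∈ insertionRegion k ↔ StrictMono (k.insertNth p.1 p.2 : Fin (m + 1) → ℝ) ∧
      p.1 ∈ Ioo 0 1 ∧ ∀ i, p.2 i ∈ Ioo 0 1 := by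
  simp [insertionRegion, simplex, Fin.forall_iff_succAbove k]

lemma preimage_insertionRegion (k : Fin (m + 1)) :
    MeasurableEquiv.piFinSuccAbove (fun _ => ℝ) k ⁻¹' insertionRegion k = simplex (m + 1) := by
  ext g
  have hg := (Fin.insertNthEquiv (fun _ => ℝ) k).apply_symm_apply g
  exact iff_of_eq (congrArg (· ∈ simplex (m + 1)) hg)

lemma measurableSet_insertionRegion (k : Fin (m + 1)) : MeasurableSet (insertionRegion k) :=
  (MeasurableEquiv.piFinSuccAbove (fun _ => ℝ) k).symm.measurable (measurableSet_simplex (m + 1))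

lemma insertionRegion_subset (k : Fin (m + 1)) : insertionRegion k ⊆ Ioo 0 1 ×ˢ simplex m :=
  fun _ hp =>
    have ⟨hmono, ht, hh⟩ := mem_insertionRegion.1 hp
    ⟨ht, ((Fin.strictMono_insertNth_iff _ _ _).1 hmono).1, hh⟩

lemma pairwise_disjoint_insertionRegion :
    Pairwise (Function.onFun Disjoint (insertionRegion (m := m))) :=
  fun _ _ hkl => disjoint_left.2 fun _ hk hl =>
    hkl (eq_of_strictMono_insertNth (mem_insertionRegion.1 hk).1 (mem_insertionRegion.1 hl).1)

lemma iUnion_insertionRegion_ae_eq :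
    (⋃ k, insertionRegion k : Set (ℝ × (Fin m → ℝ))) =ᵐ[volume] Ioo 0 1 ×ˢ simplex m := by
  have hne : ∀ᵐ p : ℝ × (Fin m → ℝ), ∀ j, p.2 j ≠ p.1 := by
    refine ae_all_iff.2 fun j => ?_
    have hmeas : MeasurableSet {p : ℝ × (Fin m → ℝ) | p.2 j ≠ p.1} :=
      (measurableSet_eq_fun (by fun_prop) (by fun_prop)).compl
    rw [Measure.volume_eq_prod, Measure.ae_prod_iff_ae_ae hmeas]
    exact .of_forall fun t => Measure.ae_eval_ne (α := fun _ => ℝ) (fun _ => volume) j t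
  filter_upwards [hne] with p hp
  refine propext ⟨fun hmem => ?_, fun ⟨ht, hh⟩ => ?_⟩
  · obtain ⟨k, hk⟩ := mem_iUnion.1 hmem
    exact insertionRegion_subset k hk
  · obtain ⟨k, hk⟩ := exists_strictMono_insertNth hh.1 hp
    exact mem_iUnion.2 ⟨k, mem_insertionRegion.2 ⟨hk, ht, hh.2⟩⟩

open scoped Pointwise in
lemma mk_mem_insertionRegion_last {t : ℝ} {h : Fin m → ℝ} :
    (t, h) ∈ insertionRegion (Fin.last m) ↔ t ∈ Ioo 0 1 ∧ h ∈ t • simplex m := by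
  by_cases ht : t ∈ Ioo (0 : ℝ) 1
  swap
  · simp only [mem_insertionRegion, ht, false_and, and_false]
  have ht0 : 0 < t := ht.1
  have hlast : ∀ i : Fin m, ¬Fin.last m ≤ i.castSucc := fun i => (Fin.castSucc_lt_last i).not_ge
  rw [mem_smul_set_iff_inv_smul_mem₀ ht0.ne', mem_insertionRegion, Fin.strictMono_insertNth_iff]
  simp only [simplex, StrictMono, mem_ofPred_eq, Pi.smul_apply, smul_eq_mul, ht, true_and, hlast,
    Fin.castSucc_lt_last, forall_const, false_imp_iff, implies_true, and_true, mem_Ioo,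
    mul_lt_mul_iff_right₀ (inv_pos.2 ht0), mul_pos_iff_of_pos_left (inv_pos.2 ht0),
    inv_mul_lt_iff₀ ht0, mul_one]
  exact ⟨fun ⟨⟨hmono, hlt⟩, hpos⟩ => ⟨hmono, fun i => ⟨(hpos i).1, hlt i⟩⟩, fun ⟨hmono, hh⟩ =>
    ⟨⟨hmono, fun i => (hh i).2⟩, fun i => ⟨(hh i).1, (hh i).2.trans ht.2⟩⟩⟩

variable {E : Type*} [NormedAddCommGroup E] {G : (Fin m → ℝ) → E}

lemma integrableOn_prod_simplex_comp_snd (hG : IntegrableOn G (simplex m)) :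
    IntegrableOn (fun p : ℝ × (Fin m → ℝ) => G p.2) (Ioo 0 1 ×ˢ simplex m) := by
  rw [IntegrableOn, Measure.volume_eq_prod, ← Measure.prod_restrict]
  exact hG.comp_snd _

lemma integrableOn_comp_removeNth (hG : IntegrableOn G (simplex m)) (k : Fin (m + 1)) :
    IntegrableOn (fun g => G (k.removeNth g)) (simplex (m + 1)) := by
  rw [← preimage_insertionRegion k]
  exact ((volume_preserving_piFinSuccAbove (fun _ => ℝ) k).integrableOn_comp_preimage
    (MeasurableEquiv.measurableEmbedding _)).2
      ((integrableOn_prod_simplex_comp_snd hG).mono_set (insertionRegion_subset k))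

variable [NormedSpace ℝ E]

lemma setIntegral_simplex_comp_removeNth (k : Fin (m + 1)) :
    ∫ g in simplex (m + 1), G (k.removeNth g) = ∫ p in insertionRegion k, G p.2 := by
  rw [← preimage_insertionRegion k]
  exact (volume_preserving_piFinSuccAbove (fun _ => ℝ) k).setIntegral_preimage_emb
    (MeasurableEquiv.measurableEmbedding _) (fun p => G p.2) (insertionRegion k)

lemma sum_setIntegral_simplex_comp_removeNth [CompleteSpace E]
    (hG : IntegrableOn G (simplex m)) :
    ∑ k : Fin (m + 1), ∫ g in simplex (m + 1), G (k.removeNth g) = ∫ h in simplex m, G h :=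
  calc ∑ k : Fin (m + 1), ∫ g in simplex (m + 1), G (k.removeNth g)
    _ = ∑ k : Fin (m + 1), ∫ p in insertionRegion k, G p.2 := by
        simp only [setIntegral_simplex_comp_removeNth]
    _ = ∫ p in ⋃ k : Fin (m + 1), insertionRegion k, G p.2 :=
        (integral_iUnion_fintype measurableSet_insertionRegion pairwise_disjoint_insertionRegion
          fun k => (integrableOn_prod_simplex_comp_snd hG).mono_set (insertionRegion_subset k)).symm
    _ = ∫ p in Ioo (0 : ℝ) 1 ×ˢ simplex m, G p.2 :=
        setIntegral_congr_set iUnion_insertionRegion_ae_eq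
    _ = ∫ h in simplex m, G h := by
        rw [Measure.volume_eq_prod, setIntegral_prod _ (integrableOn_prod_simplex_comp_snd hG)]
        simp

lemma measureReal_simplex (n : ℕ) : volume.real (simplex n) = (n.factorial : ℝ)⁻¹ := by
  induction n with
  | zero =>
    have : simplex 0 = univ := by
      ext g
      simp [simplex, Subsingleton.strictMono]
    simp [this, measureReal_def, volume_pi]
  | succ n ih =>
    have h := sum_setIntegral_simplex_comp_removeNth (m := n) (G := fun _ => (1 : ℝ))
      (integrableOn_const (volume_simplex_ne_top n))
    simp only [setIntegral_const, Finset.sum_const, Finset.card_univ, Fintype.card_fin, ih,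
      nsmul_eq_mul, smul_eq_mul, mul_one] at h
    rw [Nat.factorial_succ, Nat.cast_mul, mul_inv, ← h]
    field_simp

open scoped Pointwise in
lemma setIntegral_simplex_comp_removeNth_last (hG : IntegrableOn G (simplex m)) :
    ∫ g in simplex (m + 1), G ((Fin.last m).removeNth g) =
      ∫ t in Ioo (0 : ℝ) 1, t ^ m • ∫ h in simplex m, G (t • h) := by
  have hint : Integrable ((insertionRegion (Fin.last m)).indicator fun p => G p.2) :=
    (integrable_indicator_iff (measurableSet_insertionRegion _)).2
      ((integrableOn_prod_simplex_comp_snd hG).mono_set (insertionRegion_subset _))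
  have hslice (t : ℝ) :
      ∫ h, (insertionRegion (Fin.last m)).indicator (fun p => G p.2) (t, h) =
        (Ioo (0 : ℝ) 1).indicator (fun t => t ^ m • ∫ h in simplex m, G (t • h)) t := by
    by_cases ht : t ∈ Ioo (0 : ℝ) 1
    · have ht0 : t ≠ 0 := ht.1.ne'
      have hind : (fun h => (insertionRegion (Fin.last m)).indicator (fun p => G p.2) (t, h)) =
          (t • simplex m).indicator G := by
        ext h
        classical simp only [indicator_apply, mk_mem_insertionRegion_last, ht, true_and]
      rw [hind, integral_indicator ((measurableSet_simplex m).const_smul₀ t), indicator_of_mem ht,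
        Measure.setIntegral_comp_smul_of_pos _ _ _ ht.1]
      simp [smul_smul, ht0]
    · simp [mk_mem_insertionRegion_last, ht]
  rw [setIntegral_simplex_comp_removeNth, ← integral_indicator (measurableSet_insertionRegion _),
    Measure.volume_eq_prod, integral_prod _ hint, ← integral_indicator measurableSet_Ioo]
  simp only [hslice]

end InsertionRegion

lemma integral_pow_mul_log (m : ℕ) :
    ∫ t in (0 : ℝ)..1, t ^ m * log t = -(1 / (m + 1 : ℝ) ^ 2) := by
  have hm : (m : ℝ) + 1 ≠ 0 := by positivity
  rw [intervalIntegral.integral_eq_sub_of_hasDerivAt_of_le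
    (f := fun t => t ^ m * (t * log t) / (m + 1) - t ^ (m + 1) / (m + 1) ^ 2) zero_le_one]
  · simp
  · have := continuous_mul_log
    fun_prop
  · intro t ht
    have hderiv := (((hasDerivAt_pow m t).mul (hasDerivAt_mul_log ht.1.ne')).div_const
      (m + 1 : ℝ)).sub ((hasDerivAt_pow (m + 1) t).div_const ((m + 1 : ℝ) ^ 2))
    refine hderiv.congr_deriv ?_
    rcases m with _ | m
    · simp
    push_cast
    field_simp
    ring
  · exact intervalIntegral.intervalIntegrable_log'.continuousOn_mul (by fun_prop)

/-- The contrast `(m + 1) G(x₁, …, x_m) − ∑ₖ G(x₁, …, x̂ₖ, …, x_{m+1})` between deleting the last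
coordinate and deleting each coordinate in turn. Elemental estimators are the deletion contrasts of
log-spacings. -/
noncomputable def deletionContrast {m : ℕ} (G : (Fin m → ℝ) → ℝ) (g : Fin (m + 1) → ℝ) : ℝ :=
  (m + 1) * G ((Fin.last m).removeNth g) - ∑ k : Fin (m + 1), G (k.removeNth g)

section DeletionContrast

variable {m : ℕ} {G : (Fin m → ℝ) → ℝ}

lemma integrableOn_deletionContrast (hG : IntegrableOn G (simplex m)) :
    IntegrableOn (deletionContrast G) (simplex (m + 1)) :=
  ((integrableOn_comp_removeNth hG _).const_mul _).sub
    (integrable_finsetSum _ fun k _ => integrableOn_comp_removeNth hG k)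

lemma setIntegral_deletionContrast (hG : IntegrableOn G (simplex m)) :
    ∫ g in simplex (m + 1), deletionContrast G g =
      (m + 1) * (∫ g in simplex (m + 1), G ((Fin.last m).removeNth g)) - ∫ h in simplex m, G h := by
  have hint (k : Fin (m + 1)) := integrableOn_comp_removeNth hG k
  simp only [deletionContrast]
  rw [integral_sub ((hint _).const_mul _) (integrable_finsetSum _ fun k _ => hint k),
    integral_const_mul, integral_finsetSum _ fun k _ => hint k,
    sum_setIntegral_simplex_comp_removeNth hG]

lemma add_one_mul_setIntegral_simplex_comp_removeNth_last (hG : IntegrableOn G (simplex m)) {ξ : ℝ}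
    (hsmul : ∀ t ∈ Ioo (0 : ℝ) 1, ∀ h ∈ simplex m, G (t • h) = G h - ξ * log t) :
    (m + 1) * ∫ g in simplex (m + 1), G ((Fin.last m).removeNth g) =
      (∫ h in simplex m, G h) + ξ / ((m + 1).factorial : ℝ) := by
  have hslice : ∀ t ∈ Ioo (0 : ℝ) 1, t ^ m • ∫ h in simplex m, G (t • h) =
      (∫ h in simplex m, G h) * t ^ m - ξ / (m.factorial : ℝ) * (t ^ m * log t) := by
    intro t ht
    rw [setIntegral_congr_fun (measurableSet_simplex m) (hsmul t ht),
      integral_sub hG (integrableOn_const (volume_simplex_ne_top m)), setIntegral_const,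
      measureReal_simplex, smul_eq_mul, smul_eq_mul]
    ring
  have hpow : IntervalIntegrable (fun t : ℝ => t ^ m) volume 0 1 :=
    (continuous_pow m).intervalIntegrable 0 1
  have hlog : IntervalIntegrable (fun t : ℝ => t ^ m * log t) volume 0 1 :=
    intervalIntegral.intervalIntegrable_log'.continuousOn_mul (by fun_prop)
  calc (m + 1) * ∫ g in simplex (m + 1), G ((Fin.last m).removeNth g)
    _ = (m + 1) * ∫ t in (0 : ℝ)..1,
          ((∫ h in simplex m, G h) * t ^ m - ξ / (m.factorial : ℝ) * (t ^ m * log t)) := by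
        rw [setIntegral_simplex_comp_removeNth_last hG,
          setIntegral_congr_fun measurableSet_Ioo hslice, ← integral_Ioc_eq_integral_Ioo,
          ← intervalIntegral.integral_of_le zero_le_one]
    _ = (m + 1) * ((∫ h in simplex m, G h) * (1 / (m + 1))
          - ξ / (m.factorial : ℝ) * -(1 / (m + 1) ^ 2)) := by
        rw [intervalIntegral.integral_sub (hpow.const_mul _) (hlog.const_mul _),
          intervalIntegral.integral_const_mul, intervalIntegral.integral_const_mul, integral_pow,
          integral_pow_mul_log]
        simp
    _ = (∫ h in simplex m, G h) + ξ / ((m + 1).factorial : ℝ) := by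
        rw [Nat.factorial_succ]
        push_cast
        field_simp
        ring

lemma factorial_mul_setIntegral_deletionContrast (hG : IntegrableOn G (simplex m)) {ξ : ℝ}
    (hsmul : ∀ t ∈ Ioo (0 : ℝ) 1, ∀ h ∈ simplex m, G (t • h) = G h - ξ * log t) :
    ((m + 1).factorial : ℝ) * ∫ g in simplex (m + 1), deletionContrast G g = ξ := by
  rw [setIntegral_deletionContrast hG, add_one_mul_setIntegral_simplex_comp_removeNth_last hG hsmul,
    add_sub_cancel_left]
  field_simp

end DeletionContrast

lemma integrableOn_log_Ioo (a b : ℝ) : IntegrableOn log (Ioo a b) := by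
  rcases le_total a b with hab | hba
  · exact (intervalIntegrable_iff_integrableOn_Ioo_of_le hab).1
      intervalIntegral.intervalIntegrable_log'
  · simp [Ioo_eq_empty_of_le hba]

lemma integrableOn_log_sub_Ioo_prod_Ioo :
    IntegrableOn (fun p : ℝ × ℝ => log (p.1 - p.2)) (Ioo 0 1 ×ˢ Ioo 0 1) := by
  have hconv : Integrable fun p : ℝ × ℝ =>
      (Ioo 0 1).indicator 1 p.2 * (Ioo (-1) 1).indicator log (p.1 - p.2) :=
    Integrable.convolution_integrand (.mul ℝ ℝ)
      ((integrable_indicator_iff measurableSet_Ioo).2 (integrableOn_const (by simp)))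
      ((integrable_indicator_iff measurableSet_Ioo).2 (integrableOn_log_Ioo (-1) 1))
  refine hconv.integrableOn.congr_fun (fun p ⟨hp₁, hp₂⟩ => ?_)
    (measurableSet_Ioo.prod measurableSet_Ioo)
  have hsub : p.1 - p.2 ∈ Ioo (-1 : ℝ) 1 :=
    ⟨by linarith [hp₁.1, hp₂.2], by linarith [hp₁.2, hp₂.1]⟩
  simp only [indicator_of_mem hp₂, indicator_of_mem hsub, Pi.one_apply, one_mul]

section Pi

variable {ι : Type*} [Fintype ι]

lemma measurePreserving_eval_prodMk {X : ι → Type*} [∀ i, MeasurableSpace (X i)]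
    (μ : ∀ i, Measure (X i)) [∀ i, IsProbabilityMeasure (μ i)] {i j : ι} (hij : i ≠ j) :
    MeasurePreserving (fun x => (x i, x j)) (Measure.pi μ) ((μ i).prod (μ j)) := by
  have hindep := (ProbabilityTheory.iIndepFun_pi (μ := μ) (X := fun _ x => x)
    fun _ => aemeasurable_id).indepFun hij
  refine ⟨by fun_prop, ?_⟩
  have hmap := (ProbabilityTheory.indepFun_iff_map_prod_eq_prod_map_map
    (measurable_pi_apply i).aemeasurable (measurable_pi_apply j).aemeasurable).1 hindep
  rw [hmap, (measurePreserving_eval μ i).map_eq, (measurePreserving_eval μ j).map_eq]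

instance isProbabilityMeasure_restrict_Ioo_zero_one :
    IsProbabilityMeasure (volume.restrict (Ioo (0 : ℝ) 1)) := ⟨by simp⟩

lemma integrableOn_log_eval (a : ι) :
    IntegrableOn (fun h : ι → ℝ => log (h a)) (univ.pi fun _ => Ioo 0 1) := by
  rw [IntegrableOn, volume_pi, Measure.restrict_pi_pi]
  exact integrable_comp_eval (integrableOn_log_Ioo 0 1)

lemma integrableOn_log_eval_sub_eval {a b : ι} (hab : a ≠ b) :
    IntegrableOn (fun h : ι → ℝ => log (h a - h b)) (univ.pi fun _ => Ioo 0 1) := by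
  have hsq := integrableOn_log_sub_Ioo_prod_Ioo
  rw [IntegrableOn, Measure.volume_eq_prod, ← Measure.prod_restrict] at hsq
  rw [IntegrableOn, volume_pi, Measure.restrict_pi_pi]
  exact (measurePreserving_eval_prodMk (fun _ : ι => volume.restrict (Ioo (0 : ℝ) 1))
    hab).integrable_comp_of_integrable hsq

end Pi

section GPD

variable {μ σ ξ : ℝ}

lemma measurable_gpdQ : Measurable (gpdQ μ σ ξ) := by
  unfold gpdQ
  split_ifs <;> fun_prop

lemma hasDerivAt_gpdQ {t : ℝ} (ht : 0 < t) :
    HasDerivAt (gpdQ μ σ ξ) (-(σ * t ^ (-ξ - 1))) t := by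
  unfold gpdQ
  split_ifs with hξ
  · refine (((hasDerivAt_log ht.ne').const_mul σ).const_sub μ).congr_deriv ?_
    simp [hξ, rpow_neg_one]
  · refine ((((hasDerivAt_rpow_const (.inl ht.ne')).sub_const 1).const_mul (σ / ξ)).const_add
      μ).congr_deriv ?_
    field_simp

lemma gpdQ_mul_sub_gpdQ_mul {c s t : ℝ} (hc : 0 < c) (hs : 0 < s) (ht : 0 < t) :
    gpdQ μ σ ξ (c * s) - gpdQ μ σ ξ (c * t) = c ^ (-ξ) * (gpdQ μ σ ξ s - gpdQ μ σ ξ t) := by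
  unfold gpdQ
  split_ifs with hξ
  · rw [log_mul hc.ne' hs.ne', log_mul hc.ne' ht.ne', hξ, neg_zero, rpow_zero]
    ring
  · rw [mul_rpow hc.le hs.le, mul_rpow hc.le ht.le]
    ring

lemma exists_gpdQ_sub_gpdQ_eq {s t : ℝ} (hs : 0 < s) (hst : s < t) :
    ∃ c ∈ Ioo s t, gpdQ μ σ ξ s - gpdQ μ σ ξ t = σ * c ^ (-ξ - 1) * (t - s) := by
  have hderiv : ∀ x, s ≤ x → HasDerivAt (gpdQ μ σ ξ) (-(σ * x ^ (-ξ - 1))) x :=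
    fun x hx => hasDerivAt_gpdQ (hs.trans_le hx)
  obtain ⟨c, hc, hslope⟩ := exists_hasDerivAt_eq_slope (gpdQ μ σ ξ) _ hst
    (fun x hx => (hderiv x hx.1).continuousAt.continuousWithinAt) (fun x hx => hderiv x hx.1.le)
  refine ⟨c, hc, ?_⟩
  rw [eq_div_iff (sub_pos.2 hst).ne'] at hslope
  linarith

lemma strictAntiOn_gpdQ (hσ : 0 < σ) : StrictAntiOn (gpdQ μ σ ξ) (Ioi 0) := by
  intro s hs t _ hst
  obtain ⟨c, ⟨hsc, _⟩, heq⟩ := exists_gpdQ_sub_gpdQ_eq (μ := μ) (σ := σ) (ξ := ξ) hs hst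
  have hc : 0 < c := (mem_Ioi.1 hs).trans hsc
  have hpos : 0 < σ * c ^ (-ξ - 1) * (t - s) := mul_pos (by positivity) (sub_pos.2 hst)
  exact sub_pos.1 (heq ▸ hpos)

lemma abs_log_gpdQ_sub_gpdQ_le (hσ : 0 < σ) {s t : ℝ} (hs : 0 < s) (hst : s < t) (ht : t ≤ 1) :
    |log (gpdQ μ σ ξ s - gpdQ μ σ ξ t)| ≤ |log σ| + |-ξ - 1| * |log s| + |log (t - s)| := by
  obtain ⟨c, ⟨hsc, hct⟩, heq⟩ := exists_gpdQ_sub_gpdQ_eq (μ := μ) (σ := σ) (ξ := ξ) hs hst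
  have hc : 0 < c := hs.trans hsc
  have hlog : |log c| ≤ |log s| :=
    abs_le_abs_of_nonpos (log_nonpos hc.le (hct.le.trans ht)) (log_le_log hs hsc.le)
  calc |log (gpdQ μ σ ξ s - gpdQ μ σ ξ t)|
    _ = |log σ + (-ξ - 1) * log c + log (t - s)| := by
        rw [heq, log_mul (by positivity) (sub_pos.2 hst).ne', log_mul hσ.ne' (by positivity),
          log_rpow hc]
    _ ≤ |log σ| + |(-ξ - 1) * log c| + |log (t - s)| := abs_add_three _ _ _
    _ ≤ |log σ| + |-ξ - 1| * |log s| + |log (t - s)| := by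
        rw [abs_mul]
        gcongr

/-- The log-spacing `log (u(h_a) − u(h_b))` of the data `u(h_i)`, for fixed positions `a` and `b`.
Elemental estimators are linear combinations of log-spacings. -/
noncomputable def logSpacing {ι : Type*} (u : ℝ → ℝ) (a b : ι) (h : ι → ℝ) : ℝ :=
  log (u (h a) - u (h b))

variable {m : ℕ} {a b : Fin m}

lemma integrableOn_logSpacing_gpdQ (hσ : 0 < σ) (hab : a < b) :
    IntegrableOn (logSpacing (gpdQ μ σ ξ) a b) (simplex m) := by
  have hbound : IntegrableOn
      (fun h : Fin m → ℝ => |log σ| + |-ξ - 1| * |log (h a)| + |log (h b - h a)|) (simplex m) :=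
    ((integrableOn_const (volume_simplex_ne_top m)).add
      (((integrableOn_log_eval a).mono_set (simplex_subset_pi_Ioo m)).abs.const_mul _)).add
      ((integrableOn_log_eval_sub_eval hab.ne').mono_set (simplex_subset_pi_Ioo m)).abs
  have hmeas : Measurable (logSpacing (gpdQ μ σ ξ) a b) := by
    have := measurable_gpdQ (μ := μ) (σ := σ) (ξ := ξ)
    unfold logSpacing
    fun_prop
  refine Integrable.mono' hbound hmeas.aestronglyMeasurable ?_
  filter_upwards [ae_restrict_mem (measurableSet_simplex m)] with h hh
  exact abs_log_gpdQ_sub_gpdQ_le hσ (hh.2 a).1 (hh.1 hab) (hh.2 b).2.le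

lemma logSpacing_gpdQ_smul (hσ : 0 < σ) (hab : a < b) {t : ℝ} (ht : 0 < t) {h : Fin m → ℝ}
    (hh : h ∈ simplex m) :
    logSpacing (gpdQ μ σ ξ) a b (t • h) = logSpacing (gpdQ μ σ ξ) a b h - ξ * log t := by
  have hspacing : gpdQ μ σ ξ (h a) - gpdQ μ σ ξ (h b) ≠ 0 :=
    (sub_pos.2 (strictAntiOn_gpdQ hσ (hh.2 a).1 (hh.2 b).1 (hh.1 hab))).ne'
  simp only [logSpacing, Pi.smul_apply, smul_eq_mul]
  rw [gpdQ_mul_sub_gpdQ_mul ht (hh.2 a).1 (hh.2 b).1, log_mul (by positivity) hspacing, log_rpow ht]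
  ring

end GPD

lemma sample_val_add_one {n : ℕ} (u : ℝ → ℝ) (g : Fin n → ℝ) (i : Fin n) :
    sample n u g (i + 1) = u (g i) := by
  simp [sample]

lemma elemental_sample_eq_deletionContrast {m : ℕ} (u : ℝ → ℝ) {a b : Fin m} (hab : a ≤ b)
    (g : Fin (m + 1) → ℝ) :
    elemental (a + 1) (b + 2) (sample (m + 1) u g) = deletionContrast (logSpacing u a b) g := by
  have hsum := sum_succAbove_pair (fun i j => log (u (g i) - u (g j))) hab
  simp only [nsmul_eq_mul, Nat.cast_sub hab, Nat.cast_sub b.is_lt.le] at hsum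
  have ha : sample (m + 1) u g (a + 1) = u (g a.castSucc) := sample_val_add_one u g a.castSucc
  have ha' : sample (m + 1) u g (a + 1 + 1) = u (g a.succ) := sample_val_add_one u g a.succ
  have hb : sample (m + 1) u g (b + 2 - 1) = u (g b.castSucc) := sample_val_add_one u g b.castSucc
  have hb' : sample (m + 1) u g (b + 2) = u (g b.succ) := sample_val_add_one u g b.succ
  simp only [elemental, deletionContrast, logSpacing, Fin.removeNth_apply, Fin.succAbove_last, hsum,
    ha, ha', hb, hb']
  push_cast
  ring

theorem elemental_unbiased_general (n I J : ℕ) (hI : 1 ≤ I) (hIJ : I + 2 ≤ J) (hJn : J ≤ n)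
    (μ σ ξ : ℝ) (hσ : 0 < σ) :
    IntegrableOn (fun g => elemental I J (sample n (gpdQ μ σ ξ) g)) (simplex n) volume ∧
    (n.factorial : ℝ) * ∫ g in simplex n, elemental I J (sample n (gpdQ μ σ ξ) g) = ξ := by
  obtain ⟨m, rfl⟩ : ∃ m, n = m + 1 := ⟨n - 1, by lia⟩
  obtain ⟨a, rfl⟩ : ∃ a : Fin m, I = a + 1 := ⟨⟨I - 1, by lia⟩, by grind⟩
  obtain ⟨b, rfl⟩ : ∃ b : Fin m, J = b + 2 := ⟨⟨J - 2, by lia⟩, by grind⟩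
  have hab : a < b := by lia
  have hG : IntegrableOn (logSpacing (gpdQ μ σ ξ) a b) (simplex m) :=
    integrableOn_logSpacing_gpdQ hσ hab
  simp only [elemental_sample_eq_deletionContrast _ hab.le]
  exact ⟨integrableOn_deletionContrast hG, factorial_mul_setIntegral_deletionContrast hG
    fun _ ht _ hh => logSpacing_gpdQ_smul hσ hab ht.1 hh⟩

/-- Each elemental estimator is an absolutely unbiased estimator of the GPD tail
parameter `ξ` for every nonzero `ξ` and every sample size `n ≥ 3`. -/
theorem elemental_unbiased (n I J : ℕ) (hn : 3 ≤ n) (hI : 1 ≤ I)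
    (hIJ : I + 2 ≤ J) (hJn : J ≤ n) (μ σ ξ : ℝ) (hσ : 0 < σ) (hξ : ξ ≠ 0) :
    IntegrableOn (fun g => elemental I J (sample n (gpdQ μ σ ξ) g)) (simplex n) volume ∧
    (n.factorial : ℝ) * ∫ g in simplex n, elemental I J (sample n (gpdQ μ σ ξ) g) = ξ :=
  elemental_unbiased_general n I J hI hIJ hJn μ σ ξ hσ
end

section
/- Let n ≥ 3, let I, J be integers with 1 ≤ I and I + 2 ≤ J ≤ n, let μ ∈ ℝ, σ > 0 and ξ ≠ 0. For integers 1 ≤ i < j ≤ n define L(i,j) = (n!/((i−1)!·(n−j)!·(j−i−1)!)) · ∫₀¹ ∫₀^y x^{i−1}·(1−y)^{n−j}·(y−x)^{j−i−1}·log(u_ξ(x) − u_ξ(y)) dx dy. Then (J−1)·L(I, J−1) − (J−1−I)·L(I, J) − I·L(I+1, J) = ξ. -/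
open MeasureTheory Real Set

/-- `L(i,j)`: the expected value of `log (X_i - X_j)` for the `i`-th and `j`-th largest
order statistics of an i.i.d. sample of size `n` with quantile function `u`, i.e.
`(n!/((i−1)!(n−j)!(j−i−1)!)) ∫₀¹∫₀^y x^{i−1}(1−y)^{n−j}(y−x)^{j−i−1} log(u(x) − u(y)) dx dy`. -/
noncomputable def Lfun (n i j : ℕ) (u : ℝ → ℝ) : ℝ :=
  ((n.factorial : ℝ) /
      ((i - 1).factorial * (n - j).factorial * (j - i - 1).factorial)) *
    ∫ y in Set.Ioo (0 : ℝ) 1, ∫ x in Set.Ioo (0 : ℝ) y,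
      x ^ (i - 1) * (1 - y) ^ (n - j) * (y - x) ^ (j - i - 1) * Real.log (u x - u y)

/-!
The larger of the two uniform order statistics is `y ∼ Beta(j, n - j + 1)`, and `s = x / y` is
independent of it with `s ∼ Beta(i, j - i)`. As `u_ξ(s y) - u_ξ(y) = y ^ (-ξ) * (u_ξ(s) - u_ξ(1))`,
`L(i,j)` is the expectation of `log (u_ξ(s) - u_ξ(1))` minus `ξ * 𝔼[log y]`. The former expectations
cancel in the elemental combination because `Beta(a, b)` is a mixture of `Beta(a, b + 1)` and
`Beta(a + 1, b)` with weights `b / (a + b)` and `a / (a + b)`. What remains is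
`ξ * (J - 1) * (𝔼[log Beta(J, n - J + 1)] - 𝔼[log Beta(J - 1, n - J + 2)])`, and the two
expectations differ by `1 / (J - 1)`.
-/

section BetaDistribution

open Filter ProbabilityTheory Topology

variable {a b : ℝ}

theorem beta_add_one_left (ha : 0 < a) (hb : 0 < b) : (a + b) * beta (a + 1) b = a * beta a b := by
  have hΓ : Gamma (a + b) ≠ 0 := (Gamma_pos_of_pos (by positivity)).ne'
  rw [beta, beta, add_right_comm, Gamma_add_one ha.ne', Gamma_add_one (by positivity)]
  field_simp

theorem beta_add_one_right (ha : 0 < a) (hb : 0 < b) :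
    (a + b) * beta a (b + 1) = b * beta a b := by
  have hΓ : Gamma (a + b) ≠ 0 := (Gamma_pos_of_pos (by positivity)).ne'
  rw [beta, beta, ← add_assoc, Gamma_add_one hb.ne', Gamma_add_one (by positivity)]
  field_simp

theorem mul_beta_add_one_left_eq (ha : 0 < a) (hb : 0 < b) :
    b * beta (a + 1) b = a * beta a (b + 1) := by
  have hab : a + b ≠ 0 := by positivity
  refine mul_left_cancel₀ hab ?_
  linear_combination b * beta_add_one_left ha hb - a * beta_add_one_right ha hb

theorem beta_natCast_add_one (p q : ℕ) :
    beta (p + 1) (q + 1) = p.factorial * q.factorial / (p + q + 1).factorial := by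
  rw [beta, Gamma_nat_eq_factorial, Gamma_nat_eq_factorial,
    ← Gamma_nat_eq_factorial (p + q + 1)]
  push_cast
  ring_nf

theorem measurable_betaPDF (a b : ℝ) : Measurable (betaPDF a b) :=
  (measurable_betaPDFReal a b).ennreal_ofReal

theorem toReal_betaPDF_smul (ha : 0 < a) (hb : 0 < b) (f : ℝ → ℝ) (x : ℝ) :
    (betaPDF a b x).toReal • f x = (Ioo 0 1).indicator
      (fun x ↦ (beta a b)⁻¹ * (x ^ (a - 1) * (1 - x) ^ (b - 1) * f x)) x := by
  by_cases hx : x ∈ Ioo (0 : ℝ) 1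
  · have hpdf := (betaPDFReal_pos hx.1 hx.2 ha hb).le
    rw [indicator_of_mem hx, betaPDF, ENNReal.toReal_ofReal hpdf, betaPDFReal,
      if_pos (mem_Ioo.1 hx), smul_eq_mul]
    ring
  · rw [indicator_of_notMem hx, betaPDF_eq, if_neg (mem_Ioo.not.1 hx), ENNReal.ofReal_zero,
      ENNReal.toReal_zero, zero_smul]

theorem integral_betaMeasure (ha : 0 < a) (hb : 0 < b) (f : ℝ → ℝ) :
    ∫ x, f x ∂betaMeasure a b =
      (beta a b)⁻¹ * ∫ x in Ioo 0 1, x ^ (a - 1) * (1 - x) ^ (b - 1) * f x := by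
  rw [betaMeasure, integral_withDensity_eq_integral_toReal_smul
    (measurable_betaPDF a b) (by simp [betaPDF])]
  simp_rw [toReal_betaPDF_smul ha hb]
  rw [integral_indicator measurableSet_Ioo, integral_const_mul]

theorem integrable_betaMeasure_iff (ha : 0 < a) (hb : 0 < b) {f : ℝ → ℝ} :
    Integrable f (betaMeasure a b) ↔
      IntegrableOn (fun x ↦ x ^ (a - 1) * (1 - x) ^ (b - 1) * f x) (Ioo 0 1) := by
  rw [betaMeasure, integrable_withDensity_iff_integrable_smul'
    (measurable_betaPDF a b) (by simp [betaPDF])]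
  simp_rw [toReal_betaPDF_smul ha hb]
  rw [integrable_indicator_iff measurableSet_Ioo, IntegrableOn,
    integrable_const_mul_iff (inv_ne_zero (beta_pos ha hb).ne').isUnit, IntegrableOn]

theorem ae_mem_Ioo_betaMeasure (a b : ℝ) : ∀ᵐ x ∂betaMeasure a b, x ∈ Ioo (0 : ℝ) 1 := by
  rw [betaMeasure, ae_withDensity_iff (measurable_betaPDF a b)]
  refine .of_forall fun x hx ↦ ?_
  by_contra h
  exact hx (by rw [betaPDF_eq, if_neg (mem_Ioo.not.1 h), ENNReal.ofReal_zero])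

theorem integral_betaMeasure_natCast_add_one (p q : ℕ) (f : ℝ → ℝ) :
    ∫ x, f x ∂betaMeasure (p + 1) (q + 1) =
      (p + q + 1).factorial / (p.factorial * q.factorial) *
        ∫ x in Ioo 0 1, x ^ p * (1 - x) ^ q * f x := by
  rw [integral_betaMeasure (by positivity) (by positivity), beta_natCast_add_one, inv_div]
  simp only [add_sub_cancel_right, rpow_natCast]

theorem integral_betaMeasure_add_one_left (ha : 0 < a) (hb : 0 < b) (f : ℝ → ℝ) :
    a * ∫ x, f x ∂betaMeasure (a + 1) b = (a + b) * ∫ x, x * f x ∂betaMeasure a b := by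
  have hβ := (beta_pos ha hb).ne'
  have hβ' := (beta_pos (add_pos ha one_pos) hb).ne'
  have hinv : a * (beta (a + 1) b)⁻¹ = (a + b) * (beta a b)⁻¹ := by
    field_simp
    linarith [beta_add_one_left ha hb]
  have hker : ∫ x in Ioo 0 1, x ^ (a + 1 - 1) * (1 - x) ^ (b - 1) * f x =
      ∫ x in Ioo 0 1, x ^ (a - 1) * (1 - x) ^ (b - 1) * (x * f x) := by
    refine setIntegral_congr_fun measurableSet_Ioo fun x hx ↦ ?_
    simp only [add_sub_right_comm, rpow_add_one hx.1.ne']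
    ring
  rw [integral_betaMeasure (by positivity) hb, integral_betaMeasure ha hb, hker]
  rw [← mul_assoc, hinv, mul_assoc]

theorem integral_betaMeasure_add_one_right (ha : 0 < a) (hb : 0 < b) (f : ℝ → ℝ) :
    b * ∫ x, f x ∂betaMeasure a (b + 1) = (a + b) * ∫ x, (1 - x) * f x ∂betaMeasure a b := by
  have hβ := (beta_pos ha hb).ne'
  have hβ' := (beta_pos ha (add_pos hb one_pos)).ne'
  have hinv : b * (beta a (b + 1))⁻¹ = (a + b) * (beta a b)⁻¹ := by
    field_simp
    linarith [beta_add_one_right ha hb]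
  have hker : ∫ x in Ioo 0 1, x ^ (a - 1) * (1 - x) ^ (b + 1 - 1) * f x =
      ∫ x in Ioo 0 1, x ^ (a - 1) * (1 - x) ^ (b - 1) * ((1 - x) * f x) := by
    refine setIntegral_congr_fun measurableSet_Ioo fun x hx ↦ ?_
    simp only [add_sub_right_comm, rpow_add_one (sub_pos.2 hx.2).ne']
    ring
  rw [integral_betaMeasure ha (by positivity), integral_betaMeasure ha hb, hker]
  rw [← mul_assoc, hinv, mul_assoc]

/-- Write `1 = (1 - x) + x` under the integral: each summand shifts one of the two parameters. -/
theorem add_mul_integral_betaMeasure (ha : 0 < a) (hb : 0 < b) {f : ℝ → ℝ}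
    (hf : Integrable f (betaMeasure a b)) :
    (a + b) * ∫ x, f x ∂betaMeasure a b =
      b * ∫ x, f x ∂betaMeasure a (b + 1) + a * ∫ x, f x ∂betaMeasure (a + 1) b := by
  have hxf : Integrable (fun x ↦ x * f x) (betaMeasure a b) := by
    refine hf.bdd_mul (c := 1) measurable_id.aestronglyMeasurable ?_
    filter_upwards [ae_mem_Ioo_betaMeasure a b] with x hx
    exact abs_le.2 ⟨by linarith [hx.1], hx.2.le⟩
  rw [integral_betaMeasure_add_one_left ha hb, integral_betaMeasure_add_one_right ha hb]
  simp only [sub_mul, one_mul]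
  rw [integral_sub hf hxf]
  ring

theorem integrable_rpow_mul_one_sub_rpow_betaMeasure {c d : ℝ} (ha : 0 < a) (hb : 0 < b)
    (hac : 0 < a + c) (hbd : 0 < b + d) :
    Integrable (fun x ↦ x ^ c * (1 - x) ^ d) (betaMeasure a b) := by
  have := isProbabilityMeasureBeta hac hbd
  have hone : Integrable (fun _ ↦ (1 : ℝ)) (betaMeasure (a + c) (b + d)) := integrable_const 1
  rw [integrable_betaMeasure_iff hac hbd] at hone
  rw [integrable_betaMeasure_iff ha hb]
  refine hone.congr_fun (fun x hx ↦ ?_) measurableSet_Ioo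
  simp only [add_sub_right_comm _ _ (1 : ℝ), rpow_add hx.1, rpow_add (sub_pos.2 hx.2)]
  ring

theorem abs_log_le_rpow_neg_div {x ε : ℝ} (hx : 0 < x) (hx1 : x ≤ 1) (hε : 0 < ε) :
    |log x| ≤ x ^ (-ε) / ε := by
  have h := log_le_rpow_div (inv_nonneg.2 hx.le) hε
  rwa [log_inv, inv_rpow hx.le, ← rpow_neg hx.le,
    ← abs_of_nonpos (log_nonpos hx.le hx1)] at h

theorem integrable_log_betaMeasure (ha : 0 < a) (hb : 0 < b) :
    Integrable log (betaMeasure a b) := by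
  have hdom : Integrable (fun x : ℝ ↦ x ^ (-(a / 2)) * (1 - x) ^ (0 : ℝ) / (a / 2))
      (betaMeasure a b) :=
    (integrable_rpow_mul_one_sub_rpow_betaMeasure ha hb (by linarith) (by linarith)).div_const _
  refine hdom.mono' measurable_log.aestronglyMeasurable ?_
  filter_upwards [ae_mem_Ioo_betaMeasure a b] with x hx
  simpa using abs_log_le_rpow_neg_div hx.1 hx.2.le (half_pos ha)

theorem integrable_log_one_sub_betaMeasure (ha : 0 < a) (hb : 0 < b) :
    Integrable (fun x ↦ log (1 - x)) (betaMeasure a b) := by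
  have hdom : Integrable (fun x : ℝ ↦ x ^ (0 : ℝ) * (1 - x) ^ (-(b / 2)) / (b / 2))
      (betaMeasure a b) :=
    (integrable_rpow_mul_one_sub_rpow_betaMeasure ha hb (by linarith) (by linarith)).div_const _
  refine hdom.mono' (by fun_prop : Measurable fun x : ℝ ↦ log (1 - x)).aestronglyMeasurable ?_
  filter_upwards [ae_mem_Ioo_betaMeasure a b] with x hx
  simpa using abs_log_le_rpow_neg_div (sub_pos.2 hx.2) (sub_le_self 1 hx.1.le) (half_pos hb)

theorem hasDerivAt_rpow_mul_one_sub_rpow_mul_log (a b : ℝ) {x : ℝ} (hx : x ∈ Ioo (0 : ℝ) 1) :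
    HasDerivAt (fun x ↦ x ^ a * (1 - x) ^ b * log x)
      (a * (x ^ (a - 1) * (1 - x) ^ b * log x) - b * (x ^ a * (1 - x) ^ (b - 1) * log x) +
        x ^ (a - 1) * (1 - x) ^ b) x := by
  have hx0 := hx.1.ne'
  have hleft := hasDerivAt_rpow_const (p := a) (.inl hx0)
  have hright := ((hasDerivAt_id x).const_sub 1).rpow_const (p := b) (.inl (sub_pos.2 hx.2).ne')
  refine ((hleft.mul hright).mul (hasDerivAt_log hx0)).congr_deriv ?_
  simp only [id_eq, Pi.mul_apply, rpow_sub_one hx0]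
  field_simp
  ring

theorem tendsto_rpow_mul_one_sub_rpow_mul_log_nhdsGT_zero (ha : 0 < a) (b : ℝ) :
    Tendsto (fun x : ℝ ↦ x ^ a * (1 - x) ^ b * log x) (𝓝[>] 0) (𝓝 0) := by
  have hone_sub : Tendsto (fun x : ℝ ↦ (1 - x) ^ b) (𝓝[>] 0) (𝓝 1) := by
    have hcont : ContinuousAt (fun x : ℝ ↦ (1 - x) ^ b) 0 :=
      (continuousAt_const.sub continuousAt_id).rpow_const (.inl (by simp))
    simpa using hcont.tendsto.mono_left nhdsWithin_le_nhds
  have h := (tendsto_log_mul_rpow_nhdsGT_zero ha).mul hone_sub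
  rw [zero_mul] at h
  exact h.congr fun x ↦ by ring

theorem tendsto_rpow_mul_one_sub_rpow_mul_log_nhdsLT_one (a : ℝ) (hb : 0 < b) :
    Tendsto (fun x : ℝ ↦ x ^ a * (1 - x) ^ b * log x) (𝓝[<] 1) (𝓝 0) := by
  have hcont : ContinuousAt (fun x : ℝ ↦ x ^ a * (1 - x) ^ b * log x) 1 :=
    ((continuousAt_id.rpow_const (.inl one_ne_zero)).mul
      ((continuousAt_const.sub continuousAt_id).rpow_const (.inr hb.le))).mul
      (continuousAt_log one_ne_zero)
  simpa using hcont.tendsto.mono_left nhdsWithin_le_nhds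

theorem setIntegral_rpow_mul_one_sub_rpow (ha : 0 < a) (hb : 0 < b) :
    ∫ x in Ioo (0 : ℝ) 1, x ^ (a - 1) * (1 - x) ^ (b - 1) = beta a b := by
  have := isProbabilityMeasureBeta ha hb
  have h := integral_betaMeasure ha hb fun _ ↦ 1
  simp only [integral_const, probReal_univ, one_smul, mul_one] at h
  exact (inv_mul_eq_one₀ (beta_pos ha hb).ne').1 h.symm |>.symm

/-- Integration by parts: `x ^ a * (1 - x) ^ b * log x` vanishes at both endpoints. -/
theorem setIntegral_rpow_mul_one_sub_rpow_mul_log (ha : 0 < a) (hb : 0 < b) :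
    b * ∫ x in Ioo (0 : ℝ) 1, x ^ a * (1 - x) ^ (b - 1) * log x =
      a * (∫ x in Ioo (0 : ℝ) 1, x ^ (a - 1) * (1 - x) ^ b * log x) + beta a (b + 1) := by
  have ha' : 0 < a + 1 := by positivity
  have hb' : 0 < b + 1 := by positivity
  have := isProbabilityMeasureBeta ha hb'
  have hleft := (integrable_betaMeasure_iff ha hb').1 (integrable_log_betaMeasure ha hb')
  have hright := (integrable_betaMeasure_iff ha' hb).1 (integrable_log_betaMeasure ha' hb)
  have hkernel := (integrable_betaMeasure_iff ha hb').1 (integrable_const (1 : ℝ))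
  simp only [add_sub_cancel_right, mul_one] at hleft hright hkernel
  have hdiff : IntegrableOn (fun x : ℝ ↦ a * (x ^ (a - 1) * (1 - x) ^ b * log x) -
      b * (x ^ a * (1 - x) ^ (b - 1) * log x)) (Ioo 0 1) :=
    (hleft.const_mul a).sub (hright.const_mul b)
  have hFTC := intervalIntegral.integral_eq_sub_of_hasDerivAt_of_tendsto zero_lt_one
    (fun x hx ↦ hasDerivAt_rpow_mul_one_sub_rpow_mul_log a b hx)
    ((intervalIntegrable_iff_integrableOn_Ioo_of_le zero_le_one).2 (hdiff.add hkernel))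
    (tendsto_rpow_mul_one_sub_rpow_mul_log_nhdsGT_zero ha b)
    (tendsto_rpow_mul_one_sub_rpow_mul_log_nhdsLT_one a hb)
  rw [intervalIntegral.integral_of_le zero_le_one, integral_Ioc_eq_integral_Ioo,
    integral_add hdiff hkernel, integral_sub (hleft.const_mul a) (hright.const_mul b),
    integral_const_mul, integral_const_mul] at hFTC
  have hbeta := setIntegral_rpow_mul_one_sub_rpow ha hb'
  rw [add_sub_cancel_right] at hbeta
  linarith

theorem mul_integral_log_betaMeasure_sub (ha : 0 < a) (hb : 0 < b) :
    a * (∫ x, log x ∂betaMeasure (a + 1) b - ∫ x, log x ∂betaMeasure a (b + 1)) = 1 := by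
  have ha' : 0 < a + 1 := by positivity
  have hb' : 0 < b + 1 := by positivity
  have hβ := (beta_pos ha' hb).ne'
  have hβ' := (beta_pos ha hb').ne'
  rw [integral_betaMeasure ha' hb, integral_betaMeasure ha hb', add_sub_cancel_right,
    add_sub_cancel_right]
  have hparts := setIntegral_rpow_mul_one_sub_rpow_mul_log ha hb
  have hshift := mul_beta_add_one_left_eq ha hb
  generalize ∫ x in Ioo (0 : ℝ) 1, x ^ a * (1 - x) ^ (b - 1) * log x = R at *
  generalize ∫ x in Ioo (0 : ℝ) 1, x ^ (a - 1) * (1 - x) ^ b * log x = L at *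
  field_simp
  refine mul_left_cancel₀ hb.ne' ?_
  linear_combination a * beta a (b + 1) * hparts - (a * L + beta a (b + 1)) * hshift

end BetaDistribution

section OrderStatistics

open ProbabilityTheory

theorem setIntegral_Ioo_zero_eq_mul {y : ℝ} (hy : 0 ≤ y) (f : ℝ → ℝ) :
    ∫ x in Ioo 0 y, f x = y * ∫ s in Ioo 0 1, f (s * y) := by
  rw [← integral_Ioc_eq_integral_Ioo, ← integral_Ioc_eq_integral_Ioo,
    ← intervalIntegral.integral_of_le hy, ← intervalIntegral.integral_of_le zero_le_one,
    ← smul_eq_mul, intervalIntegral.smul_integral_comp_mul_right, zero_mul, one_mul]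

theorem setIntegral_pow_mul_sub_pow_mul {y : ℝ} (hy : 0 ≤ y) (p r : ℕ) (f : ℝ → ℝ) :
    ∫ x in Ioo 0 y, x ^ p * (y - x) ^ r * f x =
      p.factorial * r.factorial / (p + r + 1).factorial * y ^ (p + r + 1) *
        ∫ s, f (s * y) ∂betaMeasure (p + 1) (r + 1) := by
  have hkernel (s : ℝ) : (s * y) ^ p * (y - s * y) ^ r * f (s * y) =
      y ^ (p + r) * (s ^ p * (1 - s) ^ r * f (s * y)) := by
    rw [← one_sub_mul, mul_pow, mul_pow]
    ring
  rw [setIntegral_Ioo_zero_eq_mul hy, integral_betaMeasure_natCast_add_one]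
  simp only [hkernel, integral_const_mul]
  rw [pow_succ]
  field_simp

theorem Lfun_eq_integral_betaMeasure {n i j : ℕ} (hi : 1 ≤ i) (hij : i < j) (hjn : j ≤ n)
    (u : ℝ → ℝ) :
    Lfun n i j u = ∫ y, ∫ s, log (u (s * y) - u y) ∂betaMeasure i (j - i)
      ∂betaMeasure j (n - j + 1) := by
  obtain ⟨p, rfl⟩ := Nat.exists_eq_add_of_le' hi
  obtain ⟨r, rfl⟩ := Nat.exists_eq_add_of_lt hij
  obtain ⟨q, rfl⟩ := Nat.exists_eq_add_of_le hjn
  have hr : ((p + 1 + r + 1 : ℕ) : ℝ) - (p + 1 : ℕ) = r + 1 := by push_cast; ring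
  have hj : ((p + 1 + r + 1 : ℕ) : ℝ) = (p + r + 1 : ℕ) + 1 := by push_cast; ring
  have hq : ((p + 1 + r + 1 + q : ℕ) : ℝ) - (p + 1 + r + 1 : ℕ) + 1 = q + 1 := by push_cast; ring
  have hinner (y : ℝ) (hy : y ∈ Ioo (0 : ℝ) 1) :
      ∫ x in Ioo 0 y, x ^ p * (1 - y) ^ q * (y - x) ^ r * log (u x - u y) =
        p.factorial * r.factorial / (p + r + 1).factorial * (y ^ (p + r + 1) * (1 - y) ^ q *
          ∫ s, log (u (s * y) - u y) ∂betaMeasure (p + 1) (r + 1)) := by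
    simp only [mul_right_comm _ ((1 - y) ^ q)]
    rw [integral_mul_const, setIntegral_pow_mul_sub_pow_mul hy.1.le p r fun x ↦ log (u x - u y)]
    ring
  rw [Lfun, hr, hq, hj, integral_betaMeasure_natCast_add_one]
  simp only [Nat.add_sub_cancel_right, Nat.add_sub_cancel_left,
    show p + 1 + r + 1 - (p + 1) - 1 = r by omega]
  rw [setIntegral_congr_fun measurableSet_Ioo hinner, integral_const_mul,
    show p + 1 + r + 1 + q = p + r + 1 + q + 1 by ring]
  push_cast
  field_simp

end OrderStatistics

section TailQuantile

open ProbabilityTheory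

variable {σ ξ s : ℝ}

/-- The spacing `u_ξ(s) - u_ξ(1)` of the GPD tail-quantile function, which does not depend on the
location `μ`; since `u_ξ(1) = μ`, it is encoded as the tail-quantile function with location `0`. All
other spacings are multiples of it, see `gpdQ_mul_sub`. -/
noncomputable def gpdSpacing (σ ξ s : ℝ) : ℝ := gpdQ 0 σ ξ s

theorem measurable_gpdSpacing (σ ξ : ℝ) : Measurable (gpdSpacing σ ξ) := by
  unfold gpdSpacing gpdQ
  split_ifs <;> fun_prop

theorem gpdQ_mul_sub (μ σ ξ : ℝ) {y : ℝ} (hs : 0 < s) (hy : 0 < y) :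
    gpdQ μ σ ξ (s * y) - gpdQ μ σ ξ y = y ^ (-ξ) * gpdSpacing σ ξ s := by
  rcases eq_or_ne ξ 0 with rfl | hξ
  · simp only [gpdSpacing, gpdQ, if_true, log_mul hs.ne' hy.ne', neg_zero, rpow_zero]
    ring
  · simp only [gpdSpacing, gpdQ, if_neg hξ, mul_rpow hs.le hy.le]
    ring

theorem gpdSpacing_eq_rpow_mul (σ ξ : ℝ) (hs : 0 < s) :
    gpdSpacing σ ξ s = s ^ (-ξ) * gpdSpacing σ (-ξ) s := by
  rcases eq_or_ne ξ 0 with rfl | hξ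
  · simp
  · have hinv : s ^ (-ξ) * s ^ ξ = 1 := by rw [← rpow_add hs, neg_add_cancel, rpow_zero]
    simp only [gpdSpacing, gpdQ, if_neg hξ, if_neg (neg_ne_zero.2 hξ), neg_neg]
    rw [div_neg]
    linear_combination (σ / ξ) * hinv

theorem neg_mul_log_le_gpdSpacing (hσ : 0 ≤ σ) (hξ : 0 ≤ ξ) (hs : 0 < s) :
    -(σ * log s) ≤ gpdSpacing σ ξ s := by
  rcases hξ.eq_or_lt with rfl | hξ
  · simp [gpdSpacing, gpdQ]
  · have hlog := log_le_sub_one_of_pos (rpow_pos_of_pos hs (-ξ))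
    rw [log_rpow hs] at hlog
    calc -(σ * log s) = σ / ξ * (-ξ * log s) := by field_simp
      _ ≤ σ / ξ * (s ^ (-ξ) - 1) := by gcongr
      _ = gpdSpacing σ ξ s := by rw [gpdSpacing, gpdQ, if_neg hξ.ne', zero_add]

theorem gpdSpacing_le_neg_mul_log (hσ : 0 ≤ σ) (hξ : ξ ≤ 0) (hs : 0 < s) :
    gpdSpacing σ ξ s ≤ -(σ * log s) := by
  rcases hξ.eq_or_lt with rfl | hξ
  · simp [gpdSpacing, gpdQ]
  · have hlog := log_le_sub_one_of_pos (rpow_pos_of_pos hs (-ξ))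
    rw [log_rpow hs] at hlog
    calc gpdSpacing σ ξ s = σ / ξ * (s ^ (-ξ) - 1) := by
          rw [gpdSpacing, gpdQ, if_neg hξ.ne, zero_add]
      _ ≤ σ / ξ * (-ξ * log s) :=
        mul_le_mul_of_nonpos_left hlog (div_nonpos_of_nonneg_of_nonpos hσ hξ.le)
      _ = -(σ * log s) := by field_simp [hξ.ne]

theorem rpow_abs_mul_neg_mul_log_le_gpdSpacing (ξ : ℝ) (hσ : 0 ≤ σ) (hs : s ∈ Ioo (0 : ℝ) 1) :
    s ^ |ξ| * -(σ * log s) ≤ gpdSpacing σ ξ s := by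
  have hnonneg : 0 ≤ -(σ * log s) :=
    neg_nonneg.2 (mul_nonpos_of_nonneg_of_nonpos hσ (log_nonpos hs.1.le hs.2.le))
  rcases le_total 0 ξ with hξ | hξ
  · exact (mul_le_of_le_one_left hnonneg (rpow_le_one hs.1.le hs.2.le (abs_nonneg ξ))).trans
      (neg_mul_log_le_gpdSpacing hσ hξ hs.1)
  · rw [gpdSpacing_eq_rpow_mul σ ξ hs.1, abs_of_nonpos hξ]
    exact mul_le_mul_of_nonneg_left (neg_mul_log_le_gpdSpacing hσ (neg_nonneg.2 hξ) hs.1)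
      (rpow_nonneg hs.1.le _)

theorem gpdSpacing_le_rpow_neg_abs_mul_neg_mul_log (ξ : ℝ) (hσ : 0 ≤ σ) (hs : s ∈ Ioo (0 : ℝ) 1) :
    gpdSpacing σ ξ s ≤ s ^ (-|ξ|) * -(σ * log s) := by
  have hnonneg : 0 ≤ -(σ * log s) :=
    neg_nonneg.2 (mul_nonpos_of_nonneg_of_nonpos hσ (log_nonpos hs.1.le hs.2.le))
  rcases le_total ξ 0 with hξ | hξ
  · exact (gpdSpacing_le_neg_mul_log hσ hξ hs.1).trans (le_mul_of_one_le_left hnonneg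
      (one_le_rpow_of_pos_of_le_one_of_nonpos hs.1 hs.2.le (neg_nonpos.2 (abs_nonneg ξ))))
  · rw [gpdSpacing_eq_rpow_mul σ ξ hs.1, abs_of_nonneg hξ]
    exact mul_le_mul_of_nonneg_left (gpdSpacing_le_neg_mul_log hσ (neg_nonpos.2 hξ) hs.1)
      (rpow_nonneg hs.1.le _)

theorem gpdSpacing_pos (ξ : ℝ) (hσ : 0 < σ) (hs : s ∈ Ioo (0 : ℝ) 1) : 0 < gpdSpacing σ ξ s :=
  (mul_pos (rpow_pos_of_pos hs.1 _)
    (neg_pos.2 (mul_neg_of_pos_of_neg hσ (log_neg hs.1 hs.2)))).trans_le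
    (rpow_abs_mul_neg_mul_log_le_gpdSpacing ξ hσ.le hs)

theorem abs_log_neg_log_le (hs : s ∈ Ioo (0 : ℝ) 1) :
    |log (-log s)| ≤ |log (1 - s)| + |log s| := by
  have hlower : log (1 - s) ≤ log (-log s) :=
    log_le_log (sub_pos.2 hs.2) (by linarith [log_le_sub_one_of_pos hs.1])
  have hupper : log (-log s) ≤ -log s :=
    (log_le_sub_one_of_pos (neg_pos.2 (log_neg hs.1 hs.2))).trans (by linarith)
  exact abs_le.2 ⟨by linarith [neg_abs_le (log (1 - s)), abs_nonneg (log s)],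
    by linarith [abs_nonneg (log (1 - s)), neg_abs_le (log s)]⟩

theorem abs_log_gpdSpacing_le (ξ : ℝ) (hσ : 0 < σ) (hs : s ∈ Ioo (0 : ℝ) 1) :
    |log (gpdSpacing σ ξ s)| ≤ |log σ| + |log (1 - s)| + (1 + |ξ|) * |log s| := by
  have hlog : 0 < -log s := neg_pos.2 (log_neg hs.1 hs.2)
  have hrpow (c : ℝ) : log (s ^ c * -(σ * log s)) = c * log s + (log σ + log (-log s)) := by
    rw [← mul_neg, log_mul (rpow_pos_of_pos hs.1 c).ne' (mul_pos hσ hlog).ne',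
      log_rpow hs.1, log_mul hσ.ne' hlog.ne']
  have hlower := log_le_log
    (mul_pos (rpow_pos_of_pos hs.1 _) (by linarith [mul_pos hσ hlog]))
    (rpow_abs_mul_neg_mul_log_le_gpdSpacing ξ hσ.le hs)
  have hupper := log_le_log (gpdSpacing_pos ξ hσ hs)
    (gpdSpacing_le_rpow_neg_abs_mul_neg_mul_log ξ hσ.le hs)
  rw [hrpow] at hlower hupper
  have hσabs := abs_le.1 (le_refl |log σ|)
  have hnegLog := abs_le.1 (abs_log_neg_log_le hs)
  rw [abs_of_neg (neg_pos.1 hlog)] at hnegLog ⊢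
  exact abs_le.2 ⟨by linarith, by linarith⟩

theorem integrable_log_gpdSpacing_betaMeasure {a b : ℝ} (ξ : ℝ) (ha : 0 < a) (hb : 0 < b)
    (hσ : 0 < σ) : Integrable (fun s ↦ log (gpdSpacing σ ξ s)) (betaMeasure a b) := by
  have := isProbabilityMeasureBeta ha hb
  have hdom : Integrable (fun s ↦ |log σ| + |log (1 - s)| + (1 + |ξ|) * |log s|)
      (betaMeasure a b) :=
    ((integrable_const _).add (integrable_log_one_sub_betaMeasure ha hb).abs).add
      ((integrable_log_betaMeasure ha hb).abs.const_mul _)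
  refine hdom.mono' (measurable_gpdSpacing σ ξ).log.aestronglyMeasurable ?_
  filter_upwards [ae_mem_Ioo_betaMeasure a b] with s hs
  exact abs_log_gpdSpacing_le ξ hσ hs

theorem integral_log_gpdQ_mul_sub_betaMeasure {a b y : ℝ} (μ ξ : ℝ) (ha : 0 < a) (hb : 0 < b)
    (hσ : 0 < σ) (hy : 0 < y) :
    ∫ s, log (gpdQ μ σ ξ (s * y) - gpdQ μ σ ξ y) ∂betaMeasure a b =
      ∫ s, log (gpdSpacing σ ξ s) ∂betaMeasure a b - ξ * log y := by
  have := isProbabilityMeasureBeta ha hb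
  have hsplit : ∀ᵐ s ∂betaMeasure a b, log (gpdQ μ σ ξ (s * y) - gpdQ μ σ ξ y) =
      log (gpdSpacing σ ξ s) - ξ * log y := by
    filter_upwards [ae_mem_Ioo_betaMeasure a b] with s hs
    rw [gpdQ_mul_sub μ σ ξ hs.1 hy, log_mul (rpow_pos_of_pos hy _).ne'
      (gpdSpacing_pos ξ hσ hs).ne', log_rpow hy]
    ring
  rw [integral_congr_ae hsplit, integral_sub (integrable_log_gpdSpacing_betaMeasure ξ ha hb hσ)
    (integrable_const _), integral_const, probReal_univ, one_smul]

theorem Lfun_gpdQ {n i j : ℕ} (μ ξ : ℝ) (hi : 1 ≤ i) (hij : i < j) (hjn : j ≤ n) (hσ : 0 < σ) :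
    Lfun n i j (gpdQ μ σ ξ) = ∫ s, log (gpdSpacing σ ξ s) ∂betaMeasure i (j - i) -
      ξ * ∫ y, log y ∂betaMeasure j (n - j + 1) := by
  have hi' : (0 : ℝ) < i := by exact_mod_cast hi
  have hij' : (0 : ℝ) < j - i := sub_pos.2 (by exact_mod_cast hij)
  have hj : (0 : ℝ) < j := by linarith
  have hn : (0 : ℝ) < n - j + 1 := by linarith [(Nat.cast_le (α := ℝ)).2 hjn]
  have := isProbabilityMeasureBeta hj hn
  have hratio : ∀ᵐ y ∂betaMeasure j (n - j + 1),
      ∫ s, log (gpdQ μ σ ξ (s * y) - gpdQ μ σ ξ y) ∂betaMeasure i (j - i) =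
        ∫ s, log (gpdSpacing σ ξ s) ∂betaMeasure i (j - i) - ξ * log y := by
    filter_upwards [ae_mem_Ioo_betaMeasure j (n - j + 1)] with y hy
    exact integral_log_gpdQ_mul_sub_betaMeasure μ ξ hi' hij' hσ hy.1
  rw [Lfun_eq_integral_betaMeasure hi hij hjn, integral_congr_ae hratio,
    integral_sub (integrable_const _) ((integrable_log_betaMeasure hj hn).const_mul ξ),
    integral_const, probReal_univ, one_smul, integral_const_mul]

end TailQuantile

theorem elemental_expectation_general {n I J : ℕ} (hI : 1 ≤ I) (hIJ : I + 2 ≤ J) (hJn : J ≤ n)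
    {σ : ℝ} (hσ : 0 < σ) (μ ξ : ℝ) :
    ((J : ℝ) - 1) * Lfun n I (J - 1) (gpdQ μ σ ξ)
      - ((J : ℝ) - 1 - (I : ℝ)) * Lfun n I J (gpdQ μ σ ξ)
      - (I : ℝ) * Lfun n (I + 1) J (gpdQ μ σ ξ) = ξ := by
  have ha : (0 : ℝ) < I := by exact_mod_cast hI
  obtain ⟨b, hb⟩ : ∃ b : ℝ, b = J - 1 - I := ⟨_, rfl⟩
  obtain ⟨d, hd⟩ : ∃ d : ℝ, d = n - J + 1 := ⟨_, rfl⟩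
  have hb_pos : 0 < b := by linarith [show (I : ℝ) + 2 ≤ J by exact_mod_cast hIJ]
  have hd_pos : 0 < d := by linarith [show (J : ℝ) ≤ n by exact_mod_cast hJn]
  have hmix := add_mul_integral_betaMeasure ha hb_pos
    (integrable_log_gpdSpacing_betaMeasure ξ ha hb_pos hσ)
  have hlog := mul_integral_log_betaMeasure_sub (add_pos ha hb_pos) hd_pos
  rw [Lfun_gpdQ μ ξ hI (by omega) (by omega) hσ, Lfun_gpdQ μ ξ hI (by omega) hJn hσ,
    Lfun_gpdQ μ ξ (by omega) (by omega) hJn hσ, Nat.cast_pred (by omega), Nat.cast_add_one,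
    show (n : ℝ) - (J - 1) + 1 = d + 1 by linarith, ← hb, ← hd,
    show (J : ℝ) - (I + 1) = b by linarith, show (J : ℝ) - I = b + 1 by linarith,
    show (J : ℝ) = I + b + 1 by linarith, add_sub_cancel_right]
  linear_combination hmix + ξ * hlog

/-- The elemental combination `(J−1)·L(I,J−1) − (J−1−I)·L(I,J) − I·L(I+1,J)` of expected
log-spacings equals the GPD tail parameter `ξ`. -/
theorem elemental_expectation (n I J : ℕ) (hn : 3 ≤ n) (hI : 1 ≤ I)
    (hIJ : I + 2 ≤ J) (hJn : J ≤ n) (μ σ ξ : ℝ) (hσ : 0 < σ) (hξ : ξ ≠ 0) :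
    ((J : ℝ) - 1) * Lfun n I (J - 1) (gpdQ μ σ ξ)
      - ((J : ℝ) - 1 - (I : ℝ)) * Lfun n I J (gpdQ μ σ ξ)
      - (I : ℝ) * Lfun n (I + 1) J (gpdQ μ σ ξ) = ξ :=
  elemental_expectation_general hI hIJ hJn hσ μ ξ
end

section
/- For integers 1 ≤ j ≤ n, the function x ↦ x^{j−1}(1−x)^{n−j}·log x is Lebesgue integrable on (0,1) and ∫₀¹ x^{j−1}(1−x)^{n−j}·log x dx = ((j−1)!·(n−j)!/n!)·(H_{j−1} − H_n). -/
open MeasureTheory Real Set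

open Asymptotics Filter
open scoped Topology
open Complex (betaIntegral digamma)

/-!
For fixed `v`, the Beta function `u ↦ Β(u, v)` is the Mellin transform of `(1 - x) ^ (v - 1)` on
`(0, 1)`, and differentiating a Mellin transform inserts a factor `log x` under the integral sign.
On the other hand `Β(u, v) = Γ(u) Γ(v) / Γ(u + v)` has logarithmic derivative `ψ(u) - ψ(u + v)` in
`u`. At positive integers `ψ(m + 1) = H_m - γ`, so Euler's constant cancels in the difference.
-/

section MellinIndicator

variable {E : Type*} [NormedAddCommGroup E] [NormedSpace ℂ E] {S : Set ℝ}

lemma mellinConvergent_indicator_iff (hS : MeasurableSet S) (hS_pos : S ⊆ Ioi 0) (f : ℝ → E)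
    (s : ℂ) :
    MellinConvergent (S.indicator f) s ↔
      IntegrableOn (fun x : ℝ => (x : ℂ) ^ (s - 1) • f x) S := by
  simp only [MellinConvergent, ← indicator_smul_apply S fun x : ℝ => (x : ℂ) ^ (s - 1)]
  rw [integrableOn_indicator_iff hS, inter_eq_left.mpr hS_pos]

lemma mellin_indicator (hS : MeasurableSet S) (hS_pos : S ⊆ Ioi 0) (f : ℝ → E) (s : ℂ) :
    mellin (S.indicator f) s = ∫ x : ℝ in S, (x : ℂ) ^ (s - 1) • f x := by
  simp only [mellin, ← indicator_smul_apply S fun x : ℝ => (x : ℂ) ^ (s - 1)]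
  rw [setIntegral_indicator hS, inter_eq_right.mpr hS_pos]

end MellinIndicator

section BetaKernel

/-- The function on `(0, ∞)` whose Mellin transform is the Beta function `u ↦ Β(u, v)`: it is
`(1 - x) ^ (v - 1)` for `0 < x < 1`, extended by zero. -/
noncomputable def betaKernel (v : ℂ) : ℝ → ℂ :=
  (Ioo 0 1).indicator fun x => (1 - x : ℂ) ^ (v - 1)

lemma mellin_betaKernel (u v : ℂ) : mellin (betaKernel v) u = betaIntegral u v := by
  rw [betaKernel, mellin_indicator measurableSet_Ioo Ioo_subset_Ioi_self, betaIntegral,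
    intervalIntegral.integral_of_le zero_le_one, integral_Ioc_eq_integral_Ioo]
  rfl

lemma log_smul_betaKernel (v : ℂ) :
    (fun x => log x • betaKernel v x) =
      (Ioo 0 1).indicator fun x : ℝ => (1 - x : ℂ) ^ (v - 1) * log x := by
  funext x
  rw [betaKernel, ← indicator_smul_apply]
  simp only [Complex.real_smul, mul_comm]

lemma integrable_betaKernel {v : ℂ} (hv : 0 < v.re) : Integrable (betaKernel v) := by
  rw [betaKernel, integrable_indicator_iff measurableSet_Ioo,
    ← intervalIntegrable_iff_integrableOn_Ioo_of_le zero_le_one]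
  simpa using Complex.betaIntegral_convergent (u := 1) (by simp) hv

lemma betaKernel_isBigO_atTop (v : ℂ) (g : ℝ → ℝ) : betaKernel v =O[atTop] g := by
  have h_zero : betaKernel v =ᶠ[atTop] fun _ => 0 := by
    filter_upwards [eventually_ge_atTop 1] with x hx
    exact indicator_of_notMem (fun h => h.2.not_ge hx) _
  exact h_zero.trans_isBigO (isBigO_zero _ _)

lemma betaKernel_isBigO_one (v : ℂ) : betaKernel v =O[𝓝[>] 0] fun _ => (1 : ℝ) := by
  have h_eq : betaKernel v =ᶠ[𝓝[>] 0] fun x => (1 - x : ℂ) ^ (v - 1) := by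
    filter_upwards [Ioo_mem_nhdsGT one_pos] with x hx
    exact indicator_of_mem hx _
  have h_cont : ContinuousAt (fun x : ℝ => (1 - x : ℂ) ^ (v - 1)) 0 :=
    ContinuousAt.cpow (by fun_prop) (by fun_prop) (by simp)
  exact h_eq.trans_isBigO ((h_cont.tendsto.mono_left nhdsWithin_le_nhds).isBigO_one ℝ)

end BetaKernel

lemma ne_neg_natCast_of_re_pos {s : ℂ} (hs : 0 < s.re) (m : ℕ) : s ≠ -m := by
  rintro rfl
  exact hs.not_ge (by simp)

lemma hasDerivAt_Gamma_mul_digamma {s : ℂ} (hs : ∀ m : ℕ, s ≠ -m) :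
    HasDerivAt Complex.Gamma (Complex.Gamma s * digamma s) s := by
  rw [Complex.digamma_def, logDeriv_apply, mul_div_cancel₀ _ (Complex.Gamma_ne_zero hs)]
  exact (Complex.differentiableAt_Gamma s hs).hasDerivAt

lemma hasDerivAt_betaIntegral_left {u v : ℂ} (hu : 0 < u.re) (hv : 0 < v.re) :
    HasDerivAt (fun s => betaIntegral s v)
      (betaIntegral u v * (digamma u - digamma (u + v))) u := by
  have huv : 0 < (u + v).re := add_pos hu hv
  have h_ne : Complex.Gamma (u + v) ≠ 0 := Complex.Gamma_ne_zero_of_re_pos huv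
  have h_eq : (fun s => betaIntegral s v) =ᶠ[𝓝 u]
      fun s => Complex.Gamma s * Complex.Gamma v / Complex.Gamma (s + v) := by
    filter_upwards [Complex.continuous_re.continuousAt.eventually_const_lt hu] with s hs
    exact Complex.betaIntegral_eq_Gamma_mul_div s v hs hv
  have h_num := (hasDerivAt_Gamma_mul_digamma (ne_neg_natCast_of_re_pos hu)).mul_const
    (Complex.Gamma v)
  have h_den := (hasDerivAt_Gamma_mul_digamma (ne_neg_natCast_of_re_pos huv)).comp_add_const u v
  refine ((h_num.div h_den h_ne).congr_of_eventuallyEq h_eq).congr_deriv ?_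
  rw [Complex.betaIntegral_eq_Gamma_mul_div u v hu hv]
  field_simp

theorem beta_log_integral_general {u v : ℂ} (hu : 0 < u.re) (hv : 0 < v.re) :
    IntegrableOn (fun x : ℝ => (x : ℂ) ^ (u - 1) * (1 - x : ℂ) ^ (v - 1) * log x) (Ioo 0 1) ∧
    ∫ x : ℝ in Ioo 0 1, (x : ℂ) ^ (u - 1) * (1 - x : ℂ) ^ (v - 1) * log x =
      betaIntegral u v * (digamma u - digamma (u + v)) := by
  obtain ⟨h_conv, h_deriv⟩ := mellin_hasDerivAt_of_isBigO_rpow (a := u.re + 1) (b := 0)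
    ((integrable_betaKernel hv).locallyIntegrable.locallyIntegrableOn _)
    (betaKernel_isBigO_atTop v _) (lt_add_one _) (by simpa using betaKernel_isBigO_one v) hu
  rw [log_smul_betaKernel, mellinConvergent_indicator_iff measurableSet_Ioo Ioo_subset_Ioi_self]
    at h_conv
  rw [log_smul_betaKernel, mellin_indicator measurableSet_Ioo Ioo_subset_Ioi_self,
    funext (mellin_betaKernel · v)] at h_deriv
  simp only [smul_eq_mul, ← mul_assoc] at h_conv h_deriv
  exact ⟨h_conv, h_deriv.unique (hasDerivAt_betaIntegral_left hu hv)⟩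

lemma natCast_add_one_re_pos (n : ℕ) : 0 < (n + 1 : ℂ).re := by
  simpa using n.cast_add_one_pos (α := ℝ)

lemma betaIntegral_natCast_add_one (a b : ℕ) :
    betaIntegral (a + 1) (b + 1) = a.factorial * b.factorial / (a + b + 1).factorial := by
  have h_add : (a + 1 + (b + 1) : ℂ) = (a + b + 1 : ℕ) + 1 := by push_cast; ring
  rw [Complex.betaIntegral_eq_Gamma_mul_div _ _ (natCast_add_one_re_pos a)
    (natCast_add_one_re_pos b), h_add]
  simp only [Complex.Gamma_nat_eq_factorial]

lemma digamma_natCast_add_one (n : ℕ) :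
    digamma (n + 1) = harmonic n - eulerMascheroniConstant := by
  have h_ne : (n.factorial : ℂ) ≠ 0 := mod_cast n.factorial_ne_zero
  rw [Complex.digamma_def, logDeriv_apply, Complex.deriv_Gamma_nat,
    Complex.Gamma_nat_eq_factorial, mul_div_cancel_left₀ _ h_ne]
  ring

lemma integrableOn_and_integral_pow_mul_one_sub_pow_mul_log (a b : ℕ) :
    IntegrableOn (fun x : ℝ => x ^ a * (1 - x) ^ b * log x) (Ioo 0 1) ∧
    ∫ x : ℝ in Ioo 0 1, x ^ a * (1 - x) ^ b * log x =
      a.factorial * b.factorial / (a + b + 1).factorial *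
        (harmonic a - harmonic (a + b + 1)) := by
  obtain ⟨h_int, h_eq⟩ := beta_log_integral_general (u := a + 1) (v := b + 1)
    (natCast_add_one_re_pos a) (natCast_add_one_re_pos b)
  have h_add : (a + 1 + (b + 1) : ℂ) = (a + b + 1 : ℕ) + 1 := by push_cast; ring
  rw [betaIntegral_natCast_add_one, h_add, digamma_natCast_add_one, digamma_natCast_add_one,
    sub_sub_sub_cancel_right] at h_eq
  simp only [add_sub_cancel_right, Complex.cpow_natCast] at h_int h_eq
  have h_ofReal (x : ℝ) : (x : ℂ) ^ a * (1 - x) ^ b * log x =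
      (x ^ a * (1 - x) ^ b * log x : ℝ) := by push_cast; rfl
  simp only [h_ofReal, integral_complex_ofReal] at h_int h_eq
  exact ⟨h_int.re, Complex.ofReal_injective (by push_cast; exact h_eq)⟩

/-- `∫₀¹ x^{j−1}(1−x)^{n−j} log x dx = ((j−1)!(n−j)!/n!)(H_{j−1} − H_n)`, where
`H_m = ∑_{r=1}^m 1/r` is the `m`-th harmonic number. -/
theorem beta_log_integral (n j : ℕ) (hj : 1 ≤ j) (hjn : j ≤ n) :
    IntegrableOn (fun x => x ^ (j - 1) * (1 - x) ^ (n - j) * Real.log x)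
      (Set.Ioo (0 : ℝ) 1) volume ∧
    ∫ x in Set.Ioo (0 : ℝ) 1, x ^ (j - 1) * (1 - x) ^ (n - j) * Real.log x =
      ((j - 1).factorial : ℝ) * ((n - j).factorial : ℝ) / (n.factorial : ℝ) *
        ((∑ r ∈ Finset.Icc 1 (j - 1), (1 : ℝ) / r) -
          ∑ r ∈ Finset.Icc 1 n, (1 : ℝ) / r) := by
  have h_index : j - 1 + (n - j) + 1 = n := by omega
  simpa [h_index, harmonic_eq_sum_Icc] using
    integrableOn_and_integral_pow_mul_one_sub_pow_mul_log (j - 1) (n - j)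
end

section
/- Let n ≥ 2 and let i, j be integers with 1 ≤ i < j ≤ n. Let f : (0,1) → ℝ be measurable such that φ ↦ φ^{i−1}(1−φ)^{j−i−1}·f(φ) is Lebesgue integrable on (0,1). Then the function (x,y) ↦ x^{i−1}·(1−y)^{n−j}·(y−x)^{j−i−1}·f(x/y) is Lebesgue integrable on the region {(x,y) : 0 < x < y < 1}, and ∫∫_{0<x<y<1} x^{i−1}(1−y)^{n−j}(y−x)^{j−i−1}·f(x/y) dx dy = (∫₀¹ y^{j−1}(1−y)^{n−j} dy) · (∫₀¹ φ^{i−1}(1−φ)^{j−i−1}·f(φ) dφ). -/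
open MeasureTheory Real Set

/-! In the coordinates `(y, φ)` with `x = φ y`, the triangle `0 < x < y < 1` becomes the open unit
square and `dx dy = y dφ dy`. Since `y - x = y (1 - φ)`, the weight is a function of `y` times a
function of `φ`: the powers of `y` coming from `x`, from `y - x` and from the Jacobian collect in
the first factor, so Fubini splits the integral. -/

/-- The change of variables `(y, φ) ↦ (φ y, y)`, which recovers a pair from its second coordinate
and the ratio of its coordinates. The denominator `y` is listed first so that scalar weights in `y`
precede vector-valued functions of `φ`. -/
def pairOfRatio (p : ℝ × ℝ) : ℝ × ℝ := (p.2 * p.1, p.1)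

/-- The Fréchet derivative of `pairOfRatio`, given by its Jacobian matrix. -/
noncomputable def fderivPairOfRatio (p : ℝ × ℝ) : ℝ × ℝ →L[ℝ] ℝ × ℝ :=
  (Matrix.toLin (Module.Basis.finTwoProd ℝ) (Module.Basis.finTwoProd ℝ)
    !![p.2, p.1; 1, 0]).toContinuousLinearMap

theorem hasFDerivAt_pairOfRatio (p : ℝ × ℝ) :
    HasFDerivAt pairOfRatio (fderivPairOfRatio p) p := by
  rw [fderivPairOfRatio, Matrix.toLin_finTwoProd_toContinuousLinearMap]
  have hfst : HasFDerivAt Prod.fst (ContinuousLinearMap.fst ℝ ℝ ℝ) p := hasFDerivAt_fst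
  have hsnd : HasFDerivAt Prod.snd (ContinuousLinearMap.snd ℝ ℝ ℝ) p := hasFDerivAt_snd
  convert! (hsnd.mul hfst).prodMk hfst using 2
  simp

theorem abs_det_fderivPairOfRatio (p : ℝ × ℝ) : |(fderivPairOfRatio p).det| = |p.1| := by
  simp [fderivPairOfRatio, ContinuousLinearMap.det, LinearMap.det_toLin, Matrix.det_fin_two_of]

theorem injOn_pairOfRatio : InjOn pairOfRatio {p | p.1 ≠ 0} := by
  rintro ⟨y, φ⟩ hy ⟨y', φ'⟩ - h
  obtain ⟨hx, rfl⟩ := Prod.mk.inj h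
  exact Prod.ext rfl (mul_right_cancel₀ hy hx)

theorem image_pairOfRatio_prod {t : Set ℝ} (ht : 0 ∉ t) (s : Set ℝ) :
    pairOfRatio '' t ×ˢ s = {p | p.2 ∈ t ∧ p.1 / p.2 ∈ s} := by
  have ne_zero {y : ℝ} (hy : y ∈ t) : y ≠ 0 := ne_of_mem_of_not_mem hy ht
  ext ⟨x, y⟩
  constructor
  · rintro ⟨⟨y', φ⟩, ⟨hy, hφ⟩, h⟩
    obtain ⟨rfl, rfl⟩ := Prod.mk.inj h
    exact ⟨hy, by rwa [mul_div_cancel_right₀ _ (ne_zero hy)]⟩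
  · rintro ⟨hy, hφ⟩
    exact ⟨(y, x / y), ⟨hy, hφ⟩, Prod.ext (div_mul_cancel₀ x (ne_zero hy)) rfl⟩

theorem setOf_lt_lt_lt_one_eq_setOf_div_mem {K : Type*} [Field K] [LinearOrder K]
    [IsStrictOrderedRing K] :
    {p : K × K | 0 < p.1 ∧ p.1 < p.2 ∧ p.2 < 1} =
      {p | p.2 ∈ Ioo 0 1 ∧ p.1 / p.2 ∈ Ioo 0 1} := by
  ext ⟨x, y⟩
  constructor
  · rintro ⟨hx, hxy, hy⟩
    have hy₀ : 0 < y := hx.trans hxy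
    exact ⟨⟨hy₀, hy⟩, div_pos hx hy₀, (div_lt_one hy₀).2 hxy⟩
  · rintro ⟨⟨hy₀, hy⟩, hφ₀, hφ⟩
    exact ⟨(div_pos_iff_of_pos_right hy₀).1 hφ₀, (div_lt_one hy₀).1 hφ, hy⟩

theorem integrableOn_rpow_mul_one_sub_rpow {a b : ℝ} (ha : -1 < a) (hb : -1 < b) :
    IntegrableOn (fun x : ℝ => x ^ a * (1 - x) ^ b) (Ioo 0 1) := by
  have hbeta : IntegrableOn (fun x : ℝ => (x : ℂ) ^ (((a + 1 : ℝ) : ℂ) - 1) *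
      (1 - (x : ℂ)) ^ (((b + 1 : ℝ) : ℂ) - 1)) (Ioo 0 1) :=
    (intervalIntegrable_iff_integrableOn_Ioo_of_le zero_le_one).1 <|
      Complex.betaIntegral_convergent (by simpa using neg_lt_iff_pos_add.1 ha)
        (by simpa using neg_lt_iff_pos_add.1 hb)
  refine IntegrableOn.congr_fun hbeta.norm (fun x hx => ?_) measurableSet_Ioo
  have hx₁ : 0 < 1 - x := sub_pos.2 hx.2
  have norm_eq {r : ℝ} (hr : 0 < r) (c : ℝ) :
      ‖(r : ℂ) ^ (((c + 1 : ℝ) : ℂ) - 1)‖ = r ^ c := by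
    simp [Complex.norm_cpow_eq_rpow_re_of_pos hr]
  rw [norm_mul, norm_eq hx.1, ← norm_eq hx₁ b, Complex.ofReal_sub, Complex.ofReal_one]

theorem rpow_mul_sub_rpow {x y : ℝ} (hx : 0 ≤ x) (hxy : x ≤ y) (hy : 0 < y) (a b : ℝ) :
    x ^ a * (y - x) ^ b = y ^ (a + b) * ((x / y) ^ a * (1 - x / y) ^ b) := by
  have hφ : 0 ≤ 1 - x / y := sub_nonneg.2 (div_le_one_of_le₀ hxy hy.le)
  calc x ^ a * (y - x) ^ b = (y * (x / y)) ^ a * (y * (1 - x / y)) ^ b := by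
        rw [mul_one_sub, mul_div_cancel₀ x hy.ne']
    _ = y ^ (a + b) * ((x / y) ^ a * (1 - x / y) ^ b) := by
        rw [mul_rpow hy.le (by positivity), mul_rpow hy.le hφ, rpow_add hy]
        ring

section VectorValued

variable {E : Type*} [NormedAddCommGroup E] [NormedSpace ℝ E] {s t : Set ℝ}

theorem integrableOn_div_mem_iff (hs : MeasurableSet s) (ht : MeasurableSet t) (ht₀ : 0 ∉ t)
    (F : ℝ × ℝ → E) :
    IntegrableOn F {p | p.2 ∈ t ∧ p.1 / p.2 ∈ s} ↔
      IntegrableOn (fun p => |p.1| • F (pairOfRatio p)) (t ×ˢ s) := by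
  simp only [← image_pairOfRatio_prod ht₀, ← abs_det_fderivPairOfRatio]
  exact integrableOn_image_iff_integrableOn_abs_det_fderiv_smul volume (ht.prod hs)
    (fun p _ => (hasFDerivAt_pairOfRatio p).hasFDerivWithinAt)
    (injOn_pairOfRatio.mono fun _ hp => ne_of_mem_of_not_mem hp.1 ht₀) F

theorem setIntegral_div_mem (hs : MeasurableSet s) (ht : MeasurableSet t) (ht₀ : 0 ∉ t)
    (F : ℝ × ℝ → E) :
    ∫ p in {p | p.2 ∈ t ∧ p.1 / p.2 ∈ s}, F p = ∫ p in t ×ˢ s, |p.1| • F (pairOfRatio p) := by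
  simp only [← image_pairOfRatio_prod ht₀, ← abs_det_fderivPairOfRatio]
  exact integral_image_eq_integral_abs_det_fderiv_smul volume (ht.prod hs)
    (fun p _ => (hasFDerivAt_pairOfRatio p).hasFDerivWithinAt)
    (injOn_pairOfRatio.mono fun _ hp => ne_of_mem_of_not_mem hp.1 ht₀) F

theorem abs_smul_smul_comp_pairOfRatio {p : ℝ × ℝ} (hp : p.1 ≠ 0) (v : ℝ → ℝ) (u : ℝ → E) :
    |p.1| • (|(pairOfRatio p).2|⁻¹ * v (pairOfRatio p).2) •
      u ((pairOfRatio p).1 / (pairOfRatio p).2) = v p.1 • u p.2 := by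
  rw [smul_smul, pairOfRatio, mul_inv_cancel_left₀ (abs_ne_zero.2 hp),
    mul_div_cancel_right₀ _ hp]

theorem integrableOn_smul_comp_div (hs : MeasurableSet s) (ht : MeasurableSet t) (ht₀ : 0 ∉ t)
    {v : ℝ → ℝ} {u : ℝ → E} (hv : IntegrableOn v t) (hu : IntegrableOn u s) :
    IntegrableOn (fun p : ℝ × ℝ => (|p.2|⁻¹ * v p.2) • u (p.1 / p.2))
      {p | p.2 ∈ t ∧ p.1 / p.2 ∈ s} := by
  have hprod : IntegrableOn (fun p : ℝ × ℝ => v p.1 • u p.2) (t ×ˢ s) := by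
    rw [IntegrableOn, Measure.volume_eq_prod, ← Measure.prod_restrict]
    exact hv.smul_prod hu
  exact (integrableOn_div_mem_iff hs ht ht₀ _).2 <| hprod.congr_fun
    (fun _ hp => (abs_smul_smul_comp_pairOfRatio (ne_of_mem_of_not_mem hp.1 ht₀) v u).symm)
    (ht.prod hs)

theorem setIntegral_smul_comp_div (hs : MeasurableSet s) (ht : MeasurableSet t) (ht₀ : 0 ∉ t)
    (v : ℝ → ℝ) (u : ℝ → E) :
    ∫ p in {p : ℝ × ℝ | p.2 ∈ t ∧ p.1 / p.2 ∈ s}, (|p.2|⁻¹ * v p.2) • u (p.1 / p.2) =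
      (∫ y in t, v y) • ∫ φ in s, u φ := by
  rw [setIntegral_div_mem hs ht ht₀, setIntegral_congr_fun (ht.prod hs) fun _ hp =>
    abs_smul_smul_comp_pairOfRatio (ne_of_mem_of_not_mem hp.1 ht₀) v u,
    Measure.volume_eq_prod, ← Measure.prod_restrict, integral_prod_smul]

theorem ratio_factorization_general {a b c : ℝ} (hab : -2 < a + b) (hc : -1 < c) {f : ℝ → E}
    (hint : IntegrableOn (fun φ => (φ ^ a * (1 - φ) ^ b) • f φ) (Ioo (0 : ℝ) 1)) :
    IntegrableOn
      (fun p : ℝ × ℝ => (p.1 ^ a * (1 - p.2) ^ c * (p.2 - p.1) ^ b) • f (p.1 / p.2))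
      {p : ℝ × ℝ | 0 < p.1 ∧ p.1 < p.2 ∧ p.2 < 1} ∧
    ∫ p in {p : ℝ × ℝ | 0 < p.1 ∧ p.1 < p.2 ∧ p.2 < 1},
        (p.1 ^ a * (1 - p.2) ^ c * (p.2 - p.1) ^ b) • f (p.1 / p.2) =
      (∫ y in Ioo (0 : ℝ) 1, y ^ (a + b + 1) * (1 - y) ^ c) •
        ∫ φ in Ioo (0 : ℝ) 1, (φ ^ a * (1 - φ) ^ b) • f φ := by
  have hT : MeasurableSet {p : ℝ × ℝ | 0 < p.1 ∧ p.1 < p.2 ∧ p.2 < 1} := by measurability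
  have hsplit : EqOn
      (fun p : ℝ × ℝ => (p.1 ^ a * (1 - p.2) ^ c * (p.2 - p.1) ^ b) • f (p.1 / p.2))
      (fun p => (|p.2|⁻¹ * (p.2 ^ (a + b + 1) * (1 - p.2) ^ c)) •
        ((p.1 / p.2) ^ a * (1 - p.1 / p.2) ^ b) • f (p.1 / p.2))
      {p | 0 < p.1 ∧ p.1 < p.2 ∧ p.2 < 1} := by
    rintro ⟨x, y⟩ ⟨hx, hxy, -⟩
    have hy : 0 < y := hx.trans hxy
    have hjac : |y|⁻¹ * y ^ (a + b + 1) = y ^ (a + b) := by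
      rw [abs_of_pos hy, rpow_add_one hy.ne', mul_comm, mul_inv_cancel_right₀ hy.ne']
    simp only [smul_smul]
    rw [mul_right_comm, rpow_mul_sub_rpow hx.le hxy.le hy, ← mul_assoc |y|⁻¹, hjac, mul_right_comm]
  have h₀ : (0 : ℝ) ∉ Ioo 0 1 := left_notMem_Ioo
  rw [integrableOn_congr_fun hsplit hT, setIntegral_congr_fun hT hsplit,
    setOf_lt_lt_lt_one_eq_setOf_div_mem]
  have hbeta := integrableOn_rpow_mul_one_sub_rpow (a := a + b + 1) (by linarith) hc
  exact ⟨integrableOn_smul_comp_div measurableSet_Ioo measurableSet_Ioo h₀ hbeta hint,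
    setIntegral_smul_comp_div measurableSet_Ioo measurableSet_Ioo h₀
      (fun y => y ^ (a + b + 1) * (1 - y) ^ c) fun φ => (φ ^ a * (1 - φ) ^ b) • f φ⟩

end VectorValued

/-- Factorization over the ratio `φ = x/y`: for `1 ≤ i < j ≤ n` and measurable `f`
with `φ ↦ φ^{i−1}(1−φ)^{j−i−1} f(φ)` integrable on `(0,1)`, the function
`(x,y) ↦ x^{i−1}(1−y)^{n−j}(y−x)^{j−i−1} f(x/y)` is integrable on `{0 < x < y < 1}` and
its integral factorizes as `(∫₀¹ y^{j−1}(1−y)^{n−j} dy)(∫₀¹ φ^{i−1}(1−φ)^{j−i−1} f(φ) dφ)`. -/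
theorem ratio_factorization (n i j : ℕ) (hn : 2 ≤ n) (hi : 1 ≤ i) (hij : i < j)
    (hj : j ≤ n) (f : ℝ → ℝ) (hf : Measurable f)
    (hint : IntegrableOn (fun φ => φ ^ (i - 1) * (1 - φ) ^ (j - i - 1) * f φ)
      (Set.Ioo (0 : ℝ) 1) volume) :
    IntegrableOn
      (fun p : ℝ × ℝ =>
        p.1 ^ (i - 1) * (1 - p.2) ^ (n - j) * (p.2 - p.1) ^ (j - i - 1) * f (p.1 / p.2))
      {p : ℝ × ℝ | 0 < p.1 ∧ p.1 < p.2 ∧ p.2 < 1} volume ∧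
    ∫ p in {p : ℝ × ℝ | 0 < p.1 ∧ p.1 < p.2 ∧ p.2 < 1},
        p.1 ^ (i - 1) * (1 - p.2) ^ (n - j) * (p.2 - p.1) ^ (j - i - 1) * f (p.1 / p.2) =
      (∫ y in Set.Ioo (0 : ℝ) 1, y ^ (j - 1) * (1 - y) ^ (n - j)) *
        ∫ φ in Set.Ioo (0 : ℝ) 1, φ ^ (i - 1) * (1 - φ) ^ (j - i - 1) * f φ := by
  have hexp : ((i - 1 : ℕ) : ℝ) + (j - i - 1 : ℕ) + 1 = (j - 1 : ℕ) := by norm_cast; omega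
  simpa only [hexp, rpow_natCast, smul_eq_mul] using ratio_factorization_general
    (a := (i - 1 : ℕ)) (b := (j - i - 1 : ℕ)) (c := (n - j : ℕ)) (f := f)
    (by linarith [(i - 1).cast_nonneg (α := ℝ), (j - i - 1).cast_nonneg (α := ℝ)])
    (by linarith [(n - j).cast_nonneg (α := ℝ)])
    (by simpa only [rpow_natCast, smul_eq_mul] using hint)
end

section
/- For every k ∈ ℕ, lim_{γ → ∞} γ · ∫₀¹ φ^k·log(1−φ^γ) dφ = −π²/6. Equivalently, writing γ = 1/ε, the integral g_k(1/ε) = −ψ′(1)·ε + O(ε²) as ε → 0⁺, where ψ′(1) = π²/6. -/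
open MeasureTheory Real Set Filter Asymptotics

/-!
Expanding the logarithm and integrating term by term gives
`∫₀¹ x ^ s * log (1 - x ^ γ) dx = -∑ₙ 1 / (n (s + 1 + γ n))`, the sum running over `n ≥ 1`.
Replacing `s + 1 + γ n` by `γ n` turns the series into `ζ(2) / γ`, and each term changes by
`O(1 / (γ² n²))`, uniformly in `n`, once `γ ≥ 2 |s + 1|`.
-/

/-- The paper's `g_k(γ)`, with a real exponent `s` in place of `k`. It has the junk value `0`
where the integrand is not integrable, for instance for `γ > 0` and `s + γ ≤ -1`. -/
noncomputable def rpowLogIntegral (s γ : ℝ) : ℝ :=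
  ∫ x in Ioo (0 : ℝ) 1, x ^ s * log (1 - x ^ γ)

lemma hasSum_one_div_succ_sq : HasSum (fun n : ℕ => 1 / ((n : ℝ) + 1) ^ 2) (π ^ 2 / 6) := by
  simpa using (hasSum_nat_add_iff' 1).mpr hasSum_zeta_two

section LinearDenominators

variable {a γ : ℝ}

lemma min_mul_succ_le_add_mul_succ (a γ : ℝ) (n : ℕ) :
    min γ (a + γ) * (n + 1) ≤ a + γ * (n + 1) :=
  calc min γ (a + γ) * (n + 1) = min γ (a + γ) * n + min γ (a + γ) := by ring
    _ ≤ γ * n + (a + γ) := by gcongr <;> simp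
    _ = a + γ * (n + 1) := by ring

lemma add_mul_succ_pos (hγ : 0 < γ) (ha : 0 < a + γ) (n : ℕ) : 0 < a + γ * (n + 1) :=
  lt_of_lt_of_le (by have := lt_min hγ ha; positivity) (min_mul_succ_le_add_mul_succ a γ n)

lemma summable_one_div_succ_mul_add_mul_succ (hγ : 0 < γ) (ha : 0 < a + γ) :
    Summable fun n : ℕ => 1 / (((n : ℝ) + 1) * (a + γ * (n + 1))) := by
  refine .of_nonneg_of_le (fun n => ?_) (fun n => ?_)
    (hasSum_one_div_succ_sq.summable.mul_left (1 / min γ (a + γ)))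
  · have := add_mul_succ_pos hγ ha n
    positivity
  · calc 1 / (((n : ℝ) + 1) * (a + γ * (n + 1)))
        ≤ 1 / (((n : ℝ) + 1) * (min γ (a + γ) * (n + 1))) := by
          gcongr
          exact min_mul_succ_le_add_mul_succ a γ n
      _ = 1 / min γ (a + γ) * (1 / ((n : ℝ) + 1) ^ 2) := by field_simp

lemma abs_sub_one_div_succ_mul_add_mul_succ_le (hγ : 0 < γ) (ha : 0 < a + γ) (n : ℕ) :
    |1 / γ * (1 / ((n : ℝ) + 1) ^ 2) - 1 / ((n + 1) * (a + γ * (n + 1)))|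
      ≤ |a| / (γ * min γ (a + γ)) * (1 / ((n : ℝ) + 1) ^ 2) := by
  have hmin : 0 < min γ (a + γ) := lt_min hγ ha
  have hpos := add_mul_succ_pos hγ ha n
  have hle : min γ (a + γ) ≤ a + γ * (n + 1) :=
    (le_mul_of_one_le_right hmin.le (by simp)).trans (min_mul_succ_le_add_mul_succ a γ n)
  have hsub : 1 / γ * (1 / ((n : ℝ) + 1) ^ 2) - 1 / ((n + 1) * (a + γ * (n + 1)))
      = a / (γ * (a + γ * (n + 1))) * (1 / ((n : ℝ) + 1) ^ 2) := by
    field_simp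
    ring
  rw [hsub, abs_mul, abs_div, abs_of_pos (mul_pos hγ hpos),
    abs_of_nonneg (a := 1 / ((n : ℝ) + 1) ^ 2) (by positivity)]
  gcongr

end LinearDenominators

lemma integral_Ioo_zero_one_rpow {p : ℝ} (hp : -1 < p) :
    ∫ x in Ioo (0 : ℝ) 1, x ^ p = 1 / (p + 1) := by
  rw [← integral_Ioc_eq_integral_Ioo, ← intervalIntegral.integral_of_le zero_le_one,
    integral_rpow (.inl hp), one_rpow, zero_rpow (by linarith), sub_zero]

lemma hasSum_rpow_mul_log_one_sub_rpow {x γ : ℝ} (s : ℝ) (hx : x ∈ Ioo (0 : ℝ) 1) (hγ : 0 < γ) :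
    HasSum (fun n : ℕ => x ^ (s + γ * (n + 1)) / (n + 1)) (-(x ^ s * log (1 - x ^ γ))) := by
  have hx0 : 0 < x := hx.1
  have habs : |x ^ γ| < 1 := by
    rw [abs_of_pos (rpow_pos_of_pos hx0 γ)]
    exact rpow_lt_one hx0.le hx.2 hγ
  have hterm (n : ℕ) : x ^ (s + γ * (n + 1)) / (n + 1) = x ^ s * ((x ^ γ) ^ (n + 1) / (n + 1)) := by
    rw [rpow_add hx0, rpow_mul hx0.le, mul_div_assoc]
    norm_cast
  simpa only [hterm, mul_neg] using (hasSum_pow_div_log_of_abs_lt_one habs).mul_left (x ^ s)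

lemma hasSum_neg_rpowLogIntegral {s γ : ℝ} (hγ : 0 < γ) (hs : 0 < s + 1 + γ) :
    HasSum (fun n : ℕ => 1 / (((n : ℝ) + 1) * (s + 1 + γ * (n + 1)))) (-rpowLogIntegral s γ) := by
  let F (n : ℕ) (x : ℝ) : ℝ := x ^ (s + γ * (n + 1)) / (n + 1)
  have hexp (n : ℕ) : -1 < s + γ * (n + 1) := by linarith [add_mul_succ_pos hγ hs n]
  have hF_int (n : ℕ) : IntegrableOn (F n) (Ioo 0 1) :=
    ((intervalIntegral.integrableOn_Ioo_rpow_iff one_pos).mpr (hexp n)).div_const _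
  have hF_integral (n : ℕ) :
      ∫ x in Ioo 0 1, F n x = 1 / (((n : ℝ) + 1) * (s + 1 + γ * (n + 1))) := by
    rw [integral_div, integral_Ioo_zero_one_rpow (hexp n), div_div]
    ring
  have hF_norm (n : ℕ) : ∫ x in Ioo 0 1, ‖F n x‖ = ∫ x in Ioo 0 1, F n x :=
    setIntegral_congr_fun measurableSet_Ioo fun x hx =>
      norm_of_nonneg (div_nonneg (rpow_nonneg hx.1.le _) n.cast_add_one_pos.le)
  have hF_tsum : ∫ x in Ioo 0 1, ∑' n, F n x = -rpowLogIntegral s γ := by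
    rw [rpowLogIntegral, ← integral_neg]
    exact setIntegral_congr_fun measurableSet_Ioo fun x hx =>
      (hasSum_rpow_mul_log_one_sub_rpow s hx hγ).tsum_eq
  have hsum := hasSum_integral_of_summable_integral_norm hF_int
    (by simpa only [hF_norm, hF_integral] using summable_one_div_succ_mul_add_mul_succ hγ hs)
  simpa only [hF_integral, hF_tsum] using hsum

lemma abs_rpowLogIntegral_add_le {s γ : ℝ} (hγ : 0 < γ) (hs : 0 < s + 1 + γ) :
    |rpowLogIntegral s γ + π ^ 2 / 6 * γ⁻¹|
      ≤ |s + 1| / (γ * min γ (s + 1 + γ)) * (π ^ 2 / 6) := by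
  have hdiff := (hasSum_one_div_succ_sq.mul_left (1 / γ)).sub (hasSum_neg_rpowLogIntegral hγ hs)
  have hbound := hasSum_one_div_succ_sq.mul_left (|s + 1| / (γ * min γ (s + 1 + γ)))
  calc |rpowLogIntegral s γ + π ^ 2 / 6 * γ⁻¹|
      = |1 / γ * (π ^ 2 / 6) - -rpowLogIntegral s γ| := by congr 1; ring
    _ ≤ |s + 1| / (γ * min γ (s + 1 + γ)) * (π ^ 2 / 6) :=
        hdiff.norm_le_of_bounded hbound (abs_sub_one_div_succ_mul_add_mul_succ_le hγ hs)

lemma isBigO_rpowLogIntegral_add (s : ℝ) :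
    (fun γ => rpowLogIntegral s γ + π ^ 2 / 6 * γ⁻¹) =O[atTop] fun γ : ℝ => γ⁻¹ ^ 2 := by
  refine .of_bound (2 * |s + 1| * (π ^ 2 / 6)) ?_
  filter_upwards [eventually_gt_atTop 0, eventually_ge_atTop (2 * |s + 1|)] with γ hγ hγs
  have hhalf : γ / 2 ≤ s + 1 + γ := by linarith [neg_abs_le (s + 1)]
  calc ‖rpowLogIntegral s γ + π ^ 2 / 6 * γ⁻¹‖
      ≤ |s + 1| / (γ * min γ (s + 1 + γ)) * (π ^ 2 / 6) :=
        abs_rpowLogIntegral_add_le hγ (by linarith)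
    _ ≤ |s + 1| / (γ * (γ / 2)) * (π ^ 2 / 6) := by
        gcongr
        exact le_min (by linarith) hhalf
    _ = 2 * |s + 1| * (π ^ 2 / 6) * ‖γ⁻¹ ^ 2‖ := by
        rw [norm_of_nonneg (by positivity)]
        field_simp

theorem gk_asymptotics_general (s : ℝ) :
    Tendsto (fun γ : ℝ => γ * rpowLogIntegral s γ) atTop (nhds (-(π ^ 2 / 6))) ∧
    (fun ε : ℝ => rpowLogIntegral s (1 / ε) + π ^ 2 / 6 * ε)
      =O[nhdsWithin 0 (Ioi 0)] fun ε : ℝ => ε ^ 2 := by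
  constructor
  · have hO : (fun γ : ℝ => γ * (rpowLogIntegral s γ + π ^ 2 / 6 * γ⁻¹))
        =O[atTop] fun γ : ℝ => γ * γ⁻¹ ^ 2 :=
      (isBigO_refl _ _).mul (isBigO_rpowLogIntegral_add s)
    have hinv : Tendsto (fun γ : ℝ => γ * γ⁻¹ ^ 2) atTop (nhds 0) :=
      tendsto_inv_atTop_zero.congr fun γ => by rw [pow_two]; by_cases h : γ = 0 <;> simp [h]
    have hlim := (hO.trans_tendsto hinv).sub_const (π ^ 2 / 6)
    rw [zero_sub] at hlim
    refine hlim.congr' ?_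
    filter_upwards [eventually_ne_atTop 0] with γ hγ
    field_simp
    ring
  · simpa only [Function.comp_def, inv_inv, one_div] using
      (isBigO_rpowLogIntegral_add s).comp_tendsto tendsto_inv_nhdsGT_zero

/-- `lim_{γ → ∞} γ ∫₀¹ φ^k log(1−φ^γ) dφ = −π²/6`; equivalently, with `γ = 1/ε`,
`g_k(1/ε) = −(π²/6) ε + O(ε²)` as `ε → 0⁺`. -/
theorem gk_asymptotics (k : ℕ) :
    Tendsto (fun γ : ℝ => γ * ∫ φ in Set.Ioo (0 : ℝ) 1, φ ^ k * Real.log (1 - φ ^ γ))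
      atTop (nhds (-(Real.pi ^ 2 / 6))) ∧
    (fun ε : ℝ =>
        (∫ φ in Set.Ioo (0 : ℝ) 1, φ ^ k * Real.log (1 - φ ^ (1 / ε)))
          + Real.pi ^ 2 / 6 * ε) =O[nhdsWithin 0 (Set.Ioi 0)] fun ε : ℝ => ε ^ 2 := by
  simpa only [rpowLogIntegral, rpow_natCast] using gk_asymptotics_general k
end

section
/- Fix m ∈ ℕ. If real numbers b_0, …, b_m satisfy ∑_{k=0}^{m} b_k · ∫₀¹ φ^k·log(1−φ^γ) dφ = 0 for every γ > 0, then b_0 = b_1 = ⋯ = b_m = 0. That is, the functions g_k(γ) = ∫₀¹ φ^k·log(1−φ^γ) dφ, for k = 0, 1, …, m, are linearly independent as functions of γ on (0, ∞). -/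
open MeasureTheory Real Set

/-!
Substituting `u = φ ^ γ` gives `g_k(γ) = -γ⁻¹ M((k + 1) / γ)`, where `M` is the moment generating
function of `log` under the measure `-log (1 - u) / u du` on `(0, 1)`. So a linear relation among
the `g_k` is a linear relation among the dilates `t ↦ M ((k + 1) * t)`. Now `M` is analytic at `0`
and its Taylor coefficients, the moments of the negative function `log` divided by factorials, do
not vanish; comparing coefficients yields `∑ b_k (k + 1) ^ n = 0` for all `n`, and the geometric
sequences `n ↦ (k + 1) ^ n` are linearly independent.
-/

open Filter ProbabilityTheory Topology

section Dilates

lemma linearIndependent_geometric (K : Type*) [CommRing K] [IsDomain K] :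
    LinearIndependent K fun (c : K) (n : ℕ) => c ^ n :=
  (linearIndependent_monoidHom (Multiplicative ℕ) K).comp (powersHom K) (powersHom K).injective

variable {ι 𝕜 E F : Type*} [NontriviallyNormedField 𝕜] [NormedAddCommGroup E] [NormedSpace 𝕜 E]
  [NormedAddCommGroup F] [NormedSpace 𝕜 F]

lemma hasFPowerSeriesAt_finsetSum {s : Finset ι} {f : ι → F → E}
    {p : ι → FormalMultilinearSeries 𝕜 F E} {x : F}
    (h : ∀ i ∈ s, HasFPowerSeriesAt (f i) (p i) x) :
    HasFPowerSeriesAt (∑ i ∈ s, f i) (∑ i ∈ s, p i) x := by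
  classical
  induction s using Finset.induction_on with
  | empty =>
    have series_zero : HasFPowerSeriesAt (fun _ : F => (0 : E)) _ x :=
      hasFPowerSeriesAt_const (𝕜 := 𝕜)
    rwa [constFormalMultilinearSeries_zero] at series_zero
  | insert i s hi ih =>
    rw [Finset.sum_insert hi, Finset.sum_insert hi]
    exact (h i (s.mem_insert_self i)).add (ih fun j hj => h j (Finset.mem_insert_of_mem hj))

lemma coeff_finsetSum (s : Finset ι) (p : ι → FormalMultilinearSeries 𝕜 𝕜 E) (n : ℕ) :
    (∑ i ∈ s, p i).coeff n = ∑ i ∈ s, (p i).coeff n := by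
  have term_eq : (∑ i ∈ s, p i) n = ∑ i ∈ s, p i n := Finset.sum_apply n s p
  simp only [FormalMultilinearSeries.coeff, term_eq, sum_apply]

lemma coeff_compContinuousLinearMap_smul_id (p : FormalMultilinearSeries 𝕜 𝕜 E) (c : 𝕜) (n : ℕ) :
    (p.compContinuousLinearMap (c • .id 𝕜 𝕜)).coeff n = c ^ n • p.coeff n := by
  rw [FormalMultilinearSeries.coeff, FormalMultilinearSeries.compContinuousLinearMap_apply,
    ← FormalMultilinearSeries.apply_eq_pow_smul_coeff]
  congr 1
  ext
  simp

lemma eq_zero_of_frequently_sum_smul_dilate_eq_zero {f : 𝕜 → E}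
    {p : FormalMultilinearSeries 𝕜 𝕜 E} {s : Finset ι} {b c : ι → 𝕜}
    (hf : HasFPowerSeriesAt f p 0) (hp : ∀ n, p.coeff n ≠ 0) (hc : Function.Injective c)
    (h : ∃ᶠ t in 𝓝[≠] 0, ∑ i ∈ s, b i • f (c i * t) = 0) : ∀ i ∈ s, b i = 0 := by
  have dilate (i : ι) : HasFPowerSeriesAt (fun t => f (c i * t))
      (p.compContinuousLinearMap (c i • .id 𝕜 𝕜)) 0 :=
    HasFPowerSeriesAt.compContinuousLinearMap (u := c i • .id 𝕜 𝕜) (by simpa using hf)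
  have series := hasFPowerSeriesAt_finsetSum (s := s) fun i _ => (dilate i).const_smul (c := b i)
  have series_eq_zero := series.locally_zero_iff.1
    (series.analyticAt.frequently_zero_iff_eventually_zero.1 (by simpa using h))
  have power_sum_eq_zero (n : ℕ) : ∑ i ∈ s, b i * c i ^ n = 0 := by
    have coeff_eq_zero : (∑ i ∈ s, b i * c i ^ n) • p.coeff n = 0 := by
      calc (∑ i ∈ s, b i * c i ^ n) • p.coeff n
        _ = ∑ i ∈ s, b i • (p.compContinuousLinearMap (c i • .id 𝕜 𝕜)).coeff n := by
          simp only [Finset.sum_smul, coeff_compContinuousLinearMap_smul_id, smul_smul]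
        _ = (∑ i ∈ s, b i • p.compContinuousLinearMap (c i • .id 𝕜 𝕜)).coeff n := by
          rw [coeff_finsetSum]
          rfl
        _ = 0 := by
          rw [series_eq_zero]
          rfl
    exact (smul_eq_zero.1 coeff_eq_zero).resolve_right (hp n)
  have independent := (linearIndependent_geometric 𝕜).comp c hc
  refine linearIndependent_iff'.1 independent s b (funext fun n => ?_)
  simpa using power_sum_eq_zero n

end Dilates

section Moments

variable {Ω ι : Type*} [MeasurableSpace Ω] {μ : Measure Ω} {X : Ω → ℝ}

lemma integral_pow_ne_zero_of_ae_neg [NeZero μ] {n : ℕ} (hX : ∀ᵐ ω ∂μ, X ω < 0)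
    (hint : Integrable (fun ω => X ω ^ n) μ) : ∫ ω, X ω ^ n ∂μ ≠ 0 := by
  intro h
  have neg_pow_eq : (fun ω => (-X ω) ^ n) = fun ω => (-1) ^ n * X ω ^ n :=
    funext fun ω => neg_pow (X ω) n
  have nonneg : 0 ≤ᵐ[μ] fun ω => (-X ω) ^ n := by
    filter_upwards [hX] with ω hω using pow_nonneg (neg_nonneg.2 hω.le) n
  have ae_zero : (fun ω => (-X ω) ^ n) =ᵐ[μ] 0 := by
    rw [← integral_eq_zero_iff_of_nonneg_ae nonneg (neg_pow_eq ▸ hint.const_mul _), neg_pow_eq,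
      integral_const_mul, h, mul_zero]
  obtain ⟨ω, hω, hω'⟩ := (hX.and ae_zero).exists
  exact (pow_pos (neg_pos.2 hω) n).ne' hω'

lemma eq_zero_of_frequently_sum_mul_mgf_eq_zero [NeZero μ] (hX : ∀ᵐ ω ∂μ, X ω < 0)
    (h0 : 0 ∈ interior (integrableExpSet X μ)) {s : Finset ι} {b c : ι → ℝ}
    (hc : Function.Injective c)
    (h : ∃ᶠ t in 𝓝[≠] 0, ∑ i ∈ s, b i * mgf X μ (c i * t) = 0) : ∀ i ∈ s, b i = 0 := by
  refine eq_zero_of_frequently_sum_smul_dilate_eq_zero (hasFPowerSeriesAt_mgf h0)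
    (fun n => ?_) hc h
  have moment_ne_zero :=
    integral_pow_ne_zero_of_ae_neg hX (integrable_pow_of_mem_interior_integrableExpSet h0 n)
  simpa [FormalMultilinearSeries.coeff_ofScalars, n.factorial_ne_zero] using moment_ne_zero

end Moments

/-- The measure `-log (1 - u) / u du` on `(0, 1)`, of total mass `Li₂ 1`. With the factor `1 / u` in
the density, the moment generating function of `log` is the Mellin transform of `-log (1 - u)`,
with the same variable. -/
noncomputable def dilogMeasure : Measure ℝ :=
  (volume.restrict (Ioo 0 1)).withDensity fun u => ENNReal.ofReal (-log (1 - u) / u)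

namespace dilogMeasure

lemma density_pos {u : ℝ} (hu : u ∈ Ioo (0 : ℝ) 1) : 0 < -log (1 - u) / u :=
  div_pos (neg_pos.2 (log_neg (sub_pos.2 hu.2) (sub_lt_self 1 hu.1))) hu.1

lemma density_le {u : ℝ} (hu : u ∈ Ioo (0 : ℝ) 1) : -log (1 - u) / u ≤ 1 - log (1 - u) := by
  have one_sub_pos : 0 < 1 - u := sub_pos.2 hu.2
  have neg_le_mul_log : -u ≤ (1 - u) * log (1 - u) := by
    calc -u = (1 - u) * (1 - (1 - u)⁻¹) := by
          rw [mul_sub, mul_inv_cancel₀ one_sub_pos.ne']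
          ring
      _ ≤ (1 - u) * log (1 - u) :=
          mul_le_mul_of_nonneg_left (one_sub_inv_le_log_of_pos one_sub_pos) one_sub_pos.le
  rw [div_le_iff₀ hu.1]
  linarith

lemma ae_iff {P : ℝ → Prop} : (∀ᵐ u ∂dilogMeasure, P u) ↔ ∀ᵐ u, u ∈ Ioo (0 : ℝ) 1 → P u := by
  rw [dilogMeasure, ae_withDensity_iff (by fun_prop), ae_restrict_iff' measurableSet_Ioo]
  refine eventually_congr (.of_forall fun u => forall_congr' fun hu => ?_)
  simp [density_pos hu]

instance : NeZero dilogMeasure := by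
  refine ⟨fun h => ?_⟩
  have ae_false : ∀ᵐ _ ∂dilogMeasure, False := by simp [h]
  rw [ae_iff] at ae_false
  have volume_eq_zero : volume (Ioo (0 : ℝ) 1) = 0 := measure_eq_zero_iff_ae_notMem.2 ae_false
  simp at volume_eq_zero

variable {E : Type*} [NormedAddCommGroup E] [NormedSpace ℝ E]

lemma integral_eq (g : ℝ → E) :
    ∫ u, g u ∂dilogMeasure = ∫ u in Ioo 0 1, (-log (1 - u) / u) • g u := by
  rw [dilogMeasure, integral_withDensity_eq_integral_toReal_smul (by fun_prop) (by simp)]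
  refine setIntegral_congr_fun measurableSet_Ioo fun u hu => ?_
  simp [ENNReal.toReal_ofReal (density_pos hu).le]

lemma integrable_iff {g : ℝ → E} :
    Integrable g dilogMeasure ↔ IntegrableOn (fun u => (-log (1 - u) / u) • g u) (Ioo 0 1) := by
  rw [dilogMeasure, integrable_withDensity_iff_integrable_smul' (by fun_prop) (by simp)]
  refine integrableOn_congr_fun (fun u hu => ?_) measurableSet_Ioo
  simp [ENNReal.toReal_ofReal (density_pos hu).le]

lemma density_mul_rpow_le {t u : ℝ} (ht : -1 ≤ t) (hu : u ∈ Ioo (0 : ℝ) 1) :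
    -log (1 - u) / u * u ^ t ≤ 2 * u ^ t + 2 * (1 - log (1 - u)) := by
  have density_le := density_le hu
  have density_pos := density_pos hu
  have rpow_pos : 0 < u ^ t := rpow_pos_of_pos hu.1 t
  rcases le_total u (1 / 2) with le_half | half_le
  · have density_le_two : -log (1 - u) / u ≤ 2 := by
      have inv_le : (1 - u)⁻¹ ≤ 2 := inv_le_of_inv_le₀ two_pos (by linarith)
      linarith [one_sub_inv_le_log_of_pos (sub_pos.2 hu.2)]
    linarith [mul_le_mul_of_nonneg_right density_le_two rpow_pos.le]
  · have rpow_le : u ^ t ≤ 2 := by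
      calc u ^ t ≤ u ^ (-1 : ℝ) := rpow_le_rpow_of_exponent_ge hu.1 hu.2.le ht
        _ = u⁻¹ := rpow_neg_one u
        _ ≤ 2 := inv_le_of_inv_le₀ two_pos (by linarith)
    linarith [mul_le_mul density_le rpow_le rpow_pos.le (density_pos.le.trans density_le)]

lemma Ioi_subset_integrableExpSet_log : Ioi (-1) ⊆ integrableExpSet log dilogMeasure := by
  intro t ht
  have rpow_integrable : IntegrableOn (fun u : ℝ => u ^ t) (Ioo 0 1) :=
    (intervalIntegral.integrableOn_Ioo_rpow_iff one_pos).2 ht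
  have log_integrable : IntegrableOn (fun u : ℝ => log (1 - u)) (Ioo 0 1) := by
    rw [← intervalIntegrable_iff_integrableOn_Ioo_of_le zero_le_one]
    simpa using (intervalIntegral.intervalIntegrable_log' (a := 1) (b := 0)).comp_sub_left 1
  have bound_integrable := (rpow_integrable.const_mul 2).add
    (((integrable_const 1).sub log_integrable).const_mul 2)
  refine integrable_iff.2 (bound_integrable.mono' (by fun_prop) ?_)
  refine (ae_restrict_iff' measurableSet_Ioo).2 (.of_forall fun u hu => ?_)
  have exp_eq : exp (t * log u) = u ^ t := by rw [rpow_def_of_pos hu.1, mul_comm]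
  rw [exp_eq, smul_eq_mul, norm_of_nonneg (mul_nonneg (density_pos hu).le (rpow_nonneg hu.1.le t))]
  exact density_mul_rpow_le (le_of_lt ht) hu

lemma zero_mem_interior_integrableExpSet_log :
    0 ∈ interior (integrableExpSet log dilogMeasure) :=
  interior_maximal Ioi_subset_integrableExpSet_log isOpen_Ioi (by simp)

lemma ae_log_neg : ∀ᵐ u ∂dilogMeasure, log u < 0 :=
  ae_iff.2 (.of_forall fun _ hu => log_neg hu.1 hu.2)

lemma mgf_log (t : ℝ) :
    mgf log dilogMeasure t = ∫ u in Ioo 0 1, -log (1 - u) / u * u ^ t := by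
  rw [mgf, integral_eq]
  refine setIntegral_congr_fun measurableSet_Ioo fun u hu => ?_
  simp only [rpow_def_of_pos hu.1, mul_comm t, smul_eq_mul]

end dilogMeasure

lemma integral_Ioo_comp_rpow {E : Type*} [NormedAddCommGroup E] [NormedSpace ℝ E] (g : ℝ → E)
    {p : ℝ} (hp : 0 < p) :
    ∫ x in Ioo 0 1, (p * x ^ (p - 1)) • g (x ^ p) = ∫ y in Ioo 0 1, g y := by
  simp only [← Ioi_inter_Iio, ← setIntegral_indicator measurableSet_Iio]
  rw [← integral_comp_rpow_Ioi_of_pos (g := (Iio 1).indicator g) hp]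
  refine setIntegral_congr_fun measurableSet_Ioi fun x hx => ?_
  simp only [indicator_apply, mem_Iio, rpow_lt_one_iff' hx.le hp, smul_ite, smul_zero]

lemma integral_rpow_mul_log_one_sub_rpow (a : ℝ) {γ : ℝ} (hγ : 0 < γ) :
    ∫ φ in Ioo (0 : ℝ) 1, φ ^ a * log (1 - φ ^ γ) =
      -γ⁻¹ * mgf log dilogMeasure ((a + 1) * γ⁻¹) := by
  rw [dilogMeasure.mgf_log, ← integral_Ioo_comp_rpow (fun u => -log (1 - u) / u * _) hγ,
    ← integral_const_mul]
  refine setIntegral_congr_fun measurableSet_Ioo fun φ hφ => ?_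
  have rpow_ne_zero : φ ^ γ ≠ 0 := (rpow_pos_of_pos hφ.1 γ).ne'
  have exponent : (φ ^ γ) ^ ((a + 1) * γ⁻¹) = φ ^ a * φ := by
    rw [← rpow_mul hφ.1.le, mul_comm (a + 1), mul_inv_cancel_left₀ hγ.ne', rpow_add_one hφ.1.ne']
  simp only [exponent, rpow_sub_one hφ.1.ne', smul_eq_mul]
  field_simp [hφ.1.ne']

theorem gk_linearIndependent_general {ι : Type*} {s : Finset ι} {a b : ι → ℝ}
    (ha : Function.Injective a)
    (h : ∃ᶠ γ : ℝ in atTop,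
      ∑ i ∈ s, b i * ∫ φ in Ioo (0 : ℝ) 1, φ ^ a i * log (1 - φ ^ γ) = 0) :
    ∀ i ∈ s, b i = 0 := by
  have tendsto_inv : Tendsto (fun γ : ℝ => γ⁻¹) atTop (𝓝[≠] 0) :=
    tendsto_inv_atTop_nhdsGT_zero.mono_right (nhdsGT_le_nhdsNE 0)
  refine eq_zero_of_frequently_sum_mul_mgf_eq_zero dilogMeasure.ae_log_neg
    dilogMeasure.zero_mem_interior_integrableExpSet_log (c := fun i => a i + 1)
    ((add_left_injective 1).comp ha) (tendsto_inv.frequently ?_)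
  refine (h.and_eventually (eventually_gt_atTop 0)).mono fun γ ⟨hsum, hγ⟩ => ?_
  simp only [integral_rpow_mul_log_one_sub_rpow _ hγ, mul_left_comm (b _), ← Finset.mul_sum] at hsum
  exact (mul_eq_zero.1 hsum).resolve_left (neg_ne_zero.2 (inv_ne_zero hγ.ne'))

/-- Linear independence of the functions `g_k(γ) = ∫₀¹ φ^k log(1−φ^γ) dφ`,
`k = 0, …, m`, on `(0, ∞)`: if `∑_{k=0}^m b_k g_k(γ) = 0` for all `γ > 0` then all
`b_k` vanish. -/
theorem gk_linearIndependent (m : ℕ) (b : ℕ → ℝ)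
    (h : ∀ γ : ℝ, 0 < γ →
      ∑ k ∈ Finset.range (m + 1),
        b k * ∫ φ in Set.Ioo (0 : ℝ) 1, φ ^ k * Real.log (1 - φ ^ γ) = 0) :
    ∀ k ≤ m, b k = 0 := by
  have frequently_zero : ∃ᶠ γ : ℝ in atTop, _ := ((eventually_gt_atTop 0).mono h).frequently
  simp only [← rpow_natCast] at frequently_zero
  simpa using gk_linearIndependent_general Nat.cast_injective frequently_zero
end

section
/- Let N ≥ 3 and let a be a strictly upper-triangular real N×N matrix (a_{ij} = 0 unless 1 ≤ i < j ≤ N). Then a lies in the real linear span of the elemental weight matrices {E^{(I,J)} : 1 ≤ I, I+2 ≤ J ≤ N} if and only if ∑_{1 ≤ i < j ≤ N} a_{ij}·p_{ij}(X) = 0 in ℝ[X]. -/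
open Polynomial

/-- The Beta-density polynomial
`p_{ij}(X) = ((j−1)!/((i−1)!(j−i−1)!)) X^{i−1}(1−X)^{j−i−1}` in `ℝ[X]`. -/
noncomputable def betaPoly (i j : ℕ) : Polynomial ℝ :=
  Polynomial.C (((j - 1).factorial : ℝ) / (((i - 1).factorial : ℝ) * ((j - i - 1).factorial : ℝ)))
    * Polynomial.X ^ (i - 1) * (1 - Polynomial.X) ^ (j - i - 1)

/-- The elemental weight matrix `E^{(I,J)}` (as a function `ℕ → ℕ → ℝ` with 1-based
indices): its only nonzero entries are `E_{I,J−1} = J−1`, `E_{I,J} = −(J−1−I)` and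
`E_{I+1,J} = −I`. -/
noncomputable def elemMatrix (I J : ℕ) : ℕ → ℕ → ℝ := fun i j =>
  if i = I ∧ j = J - 1 then (J : ℝ) - 1
  else if i = I ∧ j = J then -((J : ℝ) - 1 - (I : ℝ))
  else if i = I + 1 ∧ j = J then -(I : ℝ)
  else 0

/-! In terms of Bernstein polynomials, `p_{ij} = (j - 1) b_{j-2, i-1}`, so the degree elevation
formula for Bernstein polynomials says that `a ↦ ∑ a_{ij} p_{ij}` kills every elemental matrix.
Conversely, the elemental matrix `E^{(i,j+1)}` rewrites the matrix unit at `(i, j)` in terms of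
units in column `j + 1`; pushing everything to the right, each strictly upper-triangular matrix is
congruent, modulo elemental matrices, to one supported in column `N`. On that column
`a ↦ ∑ a_{ij} p_{ij}` is injective, because the Bernstein polynomials of degree `N - 2` are linearly
independent. -/

section Bernstein

variable (R : Type*) [CommRing R]

theorem add_one_mul_bernsteinPolynomial (n k : ℕ) :
    ((n + 1 : ℕ) : R[X]) * bernsteinPolynomial R n k =
      ((n + 1 - k : ℕ) : R[X]) * bernsteinPolynomial R (n + 1) k +
        ((k + 1 : ℕ) : R[X]) * bernsteinPolynomial R (n + 1) (k + 1) := by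
  rcases lt_or_ge n k with hnk | hkn
  · simp [bernsteinPolynomial.eq_zero_of_lt, hnk, Nat.sub_eq_zero_of_le hnk]
  have choose_same : ((n + 1 : ℕ) : R[X]) * n.choose k =
      ((n + 1 - k : ℕ) : R[X]) * (n + 1).choose k := by
    rw [mul_comm, mul_comm ((n + 1 - k : ℕ) : R[X])]
    exact_mod_cast congrArg (Nat.cast (R := R[X])) (Nat.choose_mul_succ_eq n k)
  have choose_succ : ((n + 1 : ℕ) : R[X]) * n.choose k =
      ((k + 1 : ℕ) : R[X]) * (n + 1).choose (k + 1) := by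
    rw [mul_comm ((k + 1 : ℕ) : R[X])]
    exact_mod_cast congrArg (Nat.cast (R := R[X])) (Nat.add_one_mul_choose_eq n k)
  -- Split the left-hand side along `1 = (1 - X) + X`.
  calc ((n + 1 : ℕ) : R[X]) * bernsteinPolynomial R n k
      = ((n + 1 : ℕ) * n.choose k : R[X]) * X ^ k * (1 - X) ^ (n - k + 1) +
          ((n + 1 : ℕ) * n.choose k : R[X]) * X ^ (k + 1) * (1 - X) ^ (n - k) := by
        rw [bernsteinPolynomial]; ring
    _ = _ := by
        nth_rw 1 [choose_same]
        rw [choose_succ, bernsteinPolynomial, bernsteinPolynomial, Nat.sub_add_comm hkn,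
          Nat.add_sub_add_right]
        ring

theorem linearIndependent_X_pow_mul_one_sub_X_pow (n : ℕ) :
    LinearIndependent R fun k : Fin (n + 1) => (X ^ (k : ℕ) * (1 - X) ^ (n - k) : R[X]) := by
  induction n with
  | zero =>
    rw [Fintype.linearIndependent_iff]
    intro c hc k
    obtain rfl := Fin.fin_one_eq_zero k
    simpa [smul_eq_C_mul] using hc
  | succ n ih =>
    rw [Fintype.linearIndependent_iff] at ih ⊢
    intro c hc
    rw [Fin.sum_univ_succ] at hc
    have c_zero : c 0 = 0 := by
      simpa [eval_finsetSum] using congrArg (eval 0) hc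
    have X_mul_sum : X * ∑ k : Fin (n + 1),
        c k.succ • (X ^ (k : ℕ) * (1 - X) ^ (n - k) : R[X]) = X * 0 := by
      rw [mul_zero, ← hc, c_zero, zero_smul, zero_add, Finset.mul_sum]
      refine Finset.sum_congr rfl fun k _ => ?_
      rw [Fin.val_succ, Nat.add_sub_add_right, mul_smul_comm, pow_succ', mul_assoc]
    exact Fin.cases c_zero (ih _ (isRegular_X.left X_mul_sum))

theorem linearIndependent_bernsteinPolynomial [NoZeroDivisors R] [CharZero R] (n : ℕ) :
    LinearIndependent R fun k : Fin (n + 1) => bernsteinPolynomial R n k := by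
  rw [Fintype.linearIndependent_iff]
  intro c hc k
  have choose_mul_eq_zero : c k * (n.choose k : R) = 0 := by
    refine Fintype.linearIndependent_iff.1 (linearIndependent_X_pow_mul_one_sub_X_pow R n)
      (fun k => c k * (n.choose k : R)) ?_ k
    simpa [bernsteinPolynomial, smul_eq_C_mul, mul_assoc] using hc
  have choose_ne_zero : (n.choose k : R) ≠ 0 :=
    Nat.cast_ne_zero.2 (Nat.choose_pos (Nat.lt_succ_iff.1 k.2)).ne'
  exact (mul_eq_zero.1 choose_mul_eq_zero).resolve_right choose_ne_zero

end Bernstein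

theorem betaPoly_eq_smul_bernsteinPolynomial {i j : ℕ} (hi : 1 ≤ i) (hij : i < j) :
    betaPoly i j = ((j : ℝ) - 1) • bernsteinPolynomial ℝ (j - 2) (i - 1) := by
  obtain ⟨k, rfl⟩ := Nat.exists_eq_add_of_le' hi
  obtain ⟨n, rfl⟩ := Nat.exists_eq_add_of_le' (show 2 ≤ j by lia)
  have hkn : k ≤ n := by lia
  have coeff_eq : ((n + 1).factorial : ℝ) / (k.factorial * (n - k).factorial) =
      (n + 1) * n.choose k := by
    rw [Nat.cast_choose ℝ hkn, Nat.factorial_succ]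
    push_cast
    ring
  have exponent_eq : n + 2 - (k + 1) - 1 = n - k := by lia
  simp only [betaPoly, bernsteinPolynomial, exponent_eq, Nat.add_sub_cancel, smul_eq_C_mul,
    show n + 2 - 1 = n + 1 from rfl, coeff_eq]
  push_cast
  simp only [C_add, C_mul, C_sub, map_natCast, map_one, map_ofNat]
  ring

theorem smul_betaPoly_eq_add {i j : ℕ} (hi : 1 ≤ i) (hij : i < j) :
    (j : ℝ) • betaPoly i j =
      ((j : ℝ) - i) • betaPoly i (j + 1) + (i : ℝ) • betaPoly (i + 1) (j + 1) := by
  rw [betaPoly_eq_smul_bernsteinPolynomial hi hij,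
    betaPoly_eq_smul_bernsteinPolynomial hi (by lia),
    betaPoly_eq_smul_bernsteinPolynomial (by lia) (by lia)]
  obtain ⟨k, rfl⟩ := Nat.exists_eq_add_of_le' hi
  obtain ⟨n, rfl⟩ := Nat.exists_eq_add_of_le' (show 2 ≤ j by lia)
  have elevation := add_one_mul_bernsteinPolynomial ℝ n k
  rw [Nat.cast_sub (by lia)] at elevation
  simp only [Nat.add_sub_cancel, show n + 2 + 1 - 2 = n + 1 from rfl, smul_eq_C_mul]
  push_cast at elevation ⊢
  simp only [C_add, C_sub, map_natCast, map_one, map_ofNat]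
  linear_combination ((n : ℝ[X]) + 2) * elevation

theorem linearIndependent_betaPoly (j : ℕ) :
    LinearIndependent ℝ fun i : Set.Ico 1 j => betaPoly i j := by
  have sub_one_ne_zero (i : Set.Ico 1 j) : (j : ℝ) - 1 ≠ 0 :=
    sub_ne_zero.2 (Nat.cast_ne_one.2 (by grind))
  have shift_injective : Function.Injective
      fun i : Set.Ico 1 j => (⟨i - 1, by grind⟩ : Fin (j - 2 + 1)) := by
    intro i i' h
    grind
  convert! ((linearIndependent_bernsteinPolynomial ℝ (j - 2)).comp _ shift_injective).units_smul
    fun i => Units.mk0 _ (sub_one_ne_zero i) using 2 with i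
  exact betaPoly_eq_smul_bernsteinPolynomial i.2.1 i.2.2

/-- The matrix unit with entry `1` at position `(I, J)`, indexed by `ℕ` like `elemMatrix`. -/
def matrixUnit (I J : ℕ) : ℕ → ℕ → ℝ := fun i j => if i = I ∧ j = J then 1 else 0

/-- The map `a ↦ ∑_{1 ≤ i < j ≤ N} a_{ij} p_{ij}`, defined on all infinite matrices and ignoring
the entries outside the strict upper triangle of size `N`. -/
noncomputable def betaSum (N : ℕ) : (ℕ → ℕ → ℝ) →ₗ[ℝ] ℝ[X] where
  toFun a := ∑ i ∈ Finset.Icc 1 N, ∑ j ∈ Finset.Icc (i + 1) N, C (a i j) * betaPoly i j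
  map_add' a b := by
    simp only [Pi.add_apply, map_add, add_mul, Finset.sum_add_distrib]
  map_smul' c a := by
    simp only [Pi.smul_apply, smul_eq_mul, map_mul, RingHom.id_apply, smul_eq_C_mul,
      Finset.mul_sum, mul_assoc]

/-- The span of the elemental matrices of size `N`, to be compared with the kernel of
`betaSum N`. -/
def elemSpan (N : ℕ) : Submodule ℝ (ℕ → ℕ → ℝ) :=
  Submodule.span ℝ {m | ∃ I J, 1 ≤ I ∧ I + 2 ≤ J ∧ J ≤ N ∧ m = elemMatrix I J}

/-- The strictly upper-triangular matrices of size `N` supported in column `N`, which represent all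
strictly upper-triangular matrices modulo `elemSpan N`. -/
def lastColumn (N : ℕ) : Submodule ℝ (ℕ → ℕ → ℝ) :=
  Submodule.span ℝ (Set.range fun i : Set.Ico 1 N => matrixUnit i N)

theorem elemMatrix_succ_eq (i j : ℕ) :
    elemMatrix i (j + 1) = (j : ℝ) • matrixUnit i j - ((j : ℝ) - i) • matrixUnit i (j + 1) -
      (i : ℝ) • matrixUnit (i + 1) (j + 1) := by
  funext x y
  simp only [elemMatrix, matrixUnit, Pi.sub_apply, Pi.smul_apply, smul_eq_mul]
  grind

theorem betaSum_matrixUnit {N i j : ℕ} (hi : 1 ≤ i) (hij : i < j) (hj : j ≤ N) :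
    betaSum N (matrixUnit i j) = betaPoly i j := by
  have hiN : i ≤ N := by lia
  simp [betaSum, matrixUnit, ite_and, hi, hij, hj, hiN, apply_ite C, ite_mul]

theorem elemSpan_le_ker_betaSum (N : ℕ) : elemSpan N ≤ LinearMap.ker (betaSum N) := by
  refine Submodule.span_le.2 ?_
  rintro _ ⟨i, J, hi, hiJ, hJ, rfl⟩
  obtain ⟨j, rfl⟩ := Nat.exists_eq_add_of_le' (show 1 ≤ J by lia)
  rw [SetLike.mem_coe, LinearMap.mem_ker, elemMatrix_succ_eq, map_sub, map_sub, map_smul, map_smul,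
    map_smul, betaSum_matrixUnit hi (by lia) (by lia), betaSum_matrixUnit hi (by lia) hJ,
    betaSum_matrixUnit (by lia) (by lia) hJ, smul_betaPoly_eq_add hi (by lia)]
  abel

theorem disjoint_lastColumn_ker_betaSum (N : ℕ) :
    Disjoint (lastColumn N) (LinearMap.ker (betaSum N)) := by
  refine Submodule.range_ker_disjoint ?_
  convert linearIndependent_betaPoly N with i
  exact betaSum_matrixUnit i.2.1 i.2.2 le_rfl

theorem matrixUnit_mem_elemSpan_sup_lastColumn {N i j : ℕ} (hi : 1 ≤ i) (hij : i < j)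
    (hj : j ≤ N) : matrixUnit i j ∈ elemSpan N ⊔ lastColumn N := by
  induction hj using Nat.decreasingInduction generalizing i with
  | self => exact Submodule.mem_sup_right (Submodule.subset_span ⟨⟨i, hi, hij⟩, rfl⟩)
  | of_succ j hj ih =>
    have elem_mem : elemMatrix i (j + 1) ∈ elemSpan N ⊔ lastColumn N :=
      Submodule.mem_sup_left (Submodule.subset_span ⟨i, j + 1, hi, by lia, hj, rfl⟩)
    have unit_eq : matrixUnit i j = (j : ℝ)⁻¹ • (elemMatrix i (j + 1) +
        ((j : ℝ) - i) • matrixUnit i (j + 1) + (i : ℝ) • matrixUnit (i + 1) (j + 1)) := by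
      rw [eq_inv_smul_iff₀ (Nat.cast_ne_zero.2 (by lia)), elemMatrix_succ_eq]
      abel
    rw [unit_eq]
    exact Submodule.smul_mem _ _ (add_mem
      (add_mem elem_mem (Submodule.smul_mem _ _ (ih hi (by lia))))
      (Submodule.smul_mem _ _ (ih (by lia) (by lia))))

theorem eq_sum_smul_matrixUnit {N : ℕ} {a : ℕ → ℕ → ℝ}
    (ha : ∀ i j, ¬(1 ≤ i ∧ i < j ∧ j ≤ N) → a i j = 0) :
    a = ∑ i ∈ Finset.Icc 1 N, ∑ j ∈ Finset.Icc (i + 1) N, a i j • matrixUnit i j := by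
  funext x y
  simp only [Finset.sum_apply, Pi.smul_apply, smul_eq_mul, matrixUnit, ite_and, mul_ite, mul_one,
    mul_zero, Finset.sum_ite_irrel, Finset.sum_const_zero, Finset.sum_ite_eq, Finset.mem_Icc]
  grind

theorem mem_elemSpan_sup_lastColumn {N : ℕ} {a : ℕ → ℕ → ℝ}
    (ha : ∀ i j, ¬(1 ≤ i ∧ i < j ∧ j ≤ N) → a i j = 0) : a ∈ elemSpan N ⊔ lastColumn N := by
  rw [eq_sum_smul_matrixUnit ha]
  refine sum_mem fun i hi => sum_mem fun j hj => Submodule.smul_mem _ _ ?_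
  rw [Finset.mem_Icc] at hi hj
  exact matrixUnit_mem_elemSpan_sup_lastColumn hi.1 hj.1 hj.2

theorem elemSpan_sup_lastColumn_inf_ker_betaSum (N : ℕ) :
    (elemSpan N ⊔ lastColumn N) ⊓ LinearMap.ker (betaSum N) = elemSpan N := by
  rw [sup_inf_assoc_of_le _ (elemSpan_le_ker_betaSum N),
    (disjoint_lastColumn_ker_betaSum N).eq_bot, sup_bot_eq]

/-- A strictly upper-triangular weight matrix `a` lies in the span of the elemental
weight matrices iff `∑_{1 ≤ i < j ≤ N} a_{ij} p_{ij}(X) = 0` in `ℝ[X]`. -/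
theorem mem_span_elementals_iff (N : ℕ) (hN : 3 ≤ N) (a : ℕ → ℕ → ℝ)
    (ha : ∀ i j, ¬(1 ≤ i ∧ i < j ∧ j ≤ N) → a i j = 0) :
    a ∈ Submodule.span ℝ
        {m : ℕ → ℕ → ℝ | ∃ I J, 1 ≤ I ∧ I + 2 ≤ J ∧ J ≤ N ∧ m = elemMatrix I J} ↔
      ∑ i ∈ Finset.Icc 1 N, ∑ j ∈ Finset.Icc (i + 1) N,
        Polynomial.C (a i j) * betaPoly i j = 0 := by
  change a ∈ elemSpan N ↔ a ∈ LinearMap.ker (betaSum N)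
  rw [← elemSpan_sup_lastColumn_inf_ker_betaSum N, Submodule.mem_inf]
  exact and_iff_right (mem_elemSpan_sup_lastColumn ha)
end

section
/- Let N ≥ 3. The elemental weight matrices {E^{(I,J)} : 1 ≤ I, I+2 ≤ J ≤ N}, which number (N−1)(N−2)/2, are linearly independent over ℝ; consequently their span in the space of strictly upper-triangular real N×N matrices has dimension (N−1)(N−2)/2. -/
/-!
Order the pairs `(I, J)` by `J`, and call the entry `(I, J - 1)` the pivot of `E^{(I,J)}`. Its value
`J - 1` is nonzero, and the only other matrices that can be nonzero there are `E^{(I,J-1)}` and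
`E^{(I-1,J-1)}`, both with smaller second index, so the family is triangular.
-/

theorem linearIndependent_of_triangular {ι α R M : Type*} [Preorder α] [Ring R] [NoZeroDivisors R]
    [AddCommGroup M] [Module R M] {v : ι → M} (rank : ι → α) (φ : ι → M →ₗ[R] R)
    (diag_ne_zero : ∀ i, φ i (v i) ≠ 0)
    (rank_lt : ∀ ⦃i j⦄, j ≠ i → φ i (v j) ≠ 0 → rank j < rank i) :
    LinearIndependent R v := by
  rw [linearIndependent_iff]
  intro c hc
  by_contra hne
  obtain ⟨i, hi, hmin⟩ := c.support.exists_minimalFor rank (Finsupp.support_nonempty_iff.2 hne)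
  have off_diag : ∀ j ∈ c.support, j ≠ i → c j * φ i (v j) = 0 := by
    intro j hj hji
    by_contra hmul
    have hlt := rank_lt hji (right_ne_zero_of_mul hmul)
    exact hlt.not_ge (hmin hj hlt.le)
  have hdiag : c i * φ i (v i) = 0 :=
    calc c i * φ i (v i) = ∑ j ∈ c.support, c j * φ i (v j) :=
          (Finset.sum_eq_single_of_mem i hi off_diag).symm
      _ = φ i (Finsupp.linearCombination R v c) := by
          simp only [Finsupp.linearCombination_apply, Finsupp.sum, map_sum, map_smul, smul_eq_mul]
      _ = 0 := by rw [hc, map_zero]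
  exact mul_ne_zero (Finsupp.mem_support_iff.1 hi) (diag_ne_zero i) hdiag

theorem elemMatrix_apply_pivot (I J : ℕ) : elemMatrix I J I (J - 1) = (J : ℝ) - 1 :=
  if_pos ⟨rfl, rfl⟩

theorem snd_lt_snd_of_elemMatrix_pivot_ne_zero {p q : ℕ × ℕ} (hp : 0 < p.2) (hqp : q ≠ p)
    (h : elemMatrix q.1 q.2 p.1 (p.2 - 1) ≠ 0) : q.2 < p.2 := by
  contrapose! h
  have not_pivot : ¬(p.1 = q.1 ∧ p.2 - 1 = q.2 - 1) := by
    rintro ⟨hfst, hsnd⟩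
    exact hqp (Prod.ext hfst.symm (by omega))
  have not_col : p.2 - 1 ≠ q.2 := by omega
  simp only [elemMatrix, not_pivot, not_col, and_false, if_false]

theorem linearIndepOn_elemMatrix :
    LinearIndepOn ℝ (fun p : ℕ × ℕ => elemMatrix p.1 p.2) {p | 2 ≤ p.2} := by
  let pivot (p : {p : ℕ × ℕ | 2 ≤ p.2}) : (ℕ → ℕ → ℝ) →ₗ[ℝ] ℝ :=
    LinearMap.proj (p.1.2 - 1) ∘ₗ LinearMap.proj p.1.1
  refine linearIndependent_of_triangular (fun p => p.1.2) pivot ?_ ?_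
  · rintro ⟨⟨I, J⟩, hJ : 2 ≤ J⟩
    have hJ' : (1 : ℝ) < J := by exact_mod_cast hJ
    exact (elemMatrix_apply_pivot I J).trans_ne (sub_pos.2 hJ').ne'
  · rintro ⟨p, hp : 2 ≤ p.2⟩ q hqp hpivot
    exact snd_lt_snd_of_elemMatrix_pivot_ne_zero (zero_lt_two.trans_le hp)
      (Subtype.coe_ne_coe.2 hqp) hpivot

/-- The index pairs `(I, J)` of the elemental matrices of size `N`, reparametrised as
`k = J - 2` and `i = I - 1`, so that the constraints become `i < k < N - 1`. -/
def elementalIndexEquiv (N : ℕ) :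
    {p : ℕ × ℕ // 1 ≤ p.1 ∧ p.1 + 2 ≤ p.2 ∧ p.2 ≤ N} ≃ Σ k : Fin (N - 1), Fin k where
  toFun p := ⟨⟨p.1.2 - 2, by omega⟩, ⟨p.1.1 - 1, by simp only; omega⟩⟩
  invFun q := ⟨(q.2 + 1, q.1 + 2), by simp only; omega⟩
  left_inv := by
    rintro ⟨⟨I, J⟩, hI, hIJ, hJ⟩
    simp only [Subtype.mk.injEq, Prod.mk.injEq]
    omega
  right_inv _ := rfl

theorem natCard_elementalIndex (N : ℕ) :
    Nat.card {p : ℕ × ℕ // 1 ≤ p.1 ∧ p.1 + 2 ≤ p.2 ∧ p.2 ≤ N} = (N - 1) * (N - 2) / 2 :=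
  calc Nat.card {p : ℕ × ℕ // 1 ≤ p.1 ∧ p.1 + 2 ≤ p.2 ∧ p.2 ≤ N}
      = Nat.card (Σ k : Fin (N - 1), Fin k) := Nat.card_congr (elementalIndexEquiv N)
    _ = ∑ k : Fin (N - 1), (k : ℕ) := by simp only [Nat.card_sigma, Nat.card_fin]
    _ = ∑ k ∈ Finset.range (N - 1), k := Fin.sum_univ_eq_sum_range id (N - 1)
    _ = (N - 1) * (N - 2) / 2 := Finset.sum_range_id (N - 1)

/-- The elemental weight matrices `E^{(I,J)}`, `1 ≤ I`, `I + 2 ≤ J ≤ N`, number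
`(N−1)(N−2)/2`, are linearly independent over `ℝ`, and their span has dimension
`(N−1)(N−2)/2`. -/
theorem elementals_linearIndependent (N : ℕ) (hN : 3 ≤ N) :
    Nat.card {p : ℕ × ℕ // 1 ≤ p.1 ∧ p.1 + 2 ≤ p.2 ∧ p.2 ≤ N} = (N - 1) * (N - 2) / 2 ∧
    LinearIndependent ℝ
      (fun p : {p : ℕ × ℕ // 1 ≤ p.1 ∧ p.1 + 2 ≤ p.2 ∧ p.2 ≤ N} =>
        elemMatrix p.1.1 p.1.2) ∧
    Module.finrank ℝ
        ↥(Submodule.span ℝ (Set.range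
          (fun p : {p : ℕ × ℕ // 1 ≤ p.1 ∧ p.1 + 2 ≤ p.2 ∧ p.2 ≤ N} =>
            elemMatrix p.1.1 p.1.2))) = (N - 1) * (N - 2) / 2 := by
  have hsub : {p : ℕ × ℕ | 1 ≤ p.1 ∧ p.1 + 2 ≤ p.2 ∧ p.2 ≤ N} ⊆ {p | 2 ≤ p.2} :=
    fun _ hp => le_of_add_le_right hp.2.1
  have hli := linearIndepOn_elemMatrix.mono hsub
  have hcard := natCard_elementalIndex N
  exact ⟨hcard, hli, (Module.finrank_eq_nat_card_basis (Module.Basis.span hli)).trans hcard⟩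
end
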